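/- arXiv:2211.16652 — 4 statements merged into one kernel-verified Lean document; each statement's English description precedes it below -/
import Mathlib

section
/- Let 0 < α < ρ_c^0. Then 4α(1−α) k(0)/k(1) < 1, and every continuously differentiable function ρ : [0,1] → [0,1] satisfying the reduced ODE (1 − 2ρ(ξ)) ρ'(ξ) = −g(ξ) ρ(ξ)(1 − ρ(ξ)) on [0,1] with ρ(0) = α has terminal value ρ(1) = ρ*(α) := (1/2)(1 − √(1 − 4α(1−α) k(0)/k(1))). -/
open Set

/-- For `0 < α < ρ_c^0 = (1/2)(1-√(1-k(ξ*)/k(0)))` one has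
`4α(1-α)k(0)/k(1) < 1`, and every continuously differentiable solution
`ρ : [0,1] → [0,1]` of the reduced ODE with `ρ(0) = α` has the terminal value
`ρ(1) = ρ*(α) = (1/2)(1 - √(1 - 4α(1-α)k(0)/k(1)))`. -/
theorem reduced_solution_terminal_value_low_density
    (k : ℝ → ℝ) (ξs : ℝ)
    (hk : ContDiff ℝ 2 k)
    (hkpos : ∀ x ∈ Icc (0:ℝ) 1, 0 < k x)
    (hξs : ξs ∈ Ioo (0:ℝ) 1)
    (hmin : ∀ x ∈ Icc (0:ℝ) 1, x ≠ ξs → k ξs < k x)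
    (hk's : deriv k ξs = 0)
    (hk''s : 0 < deriv (deriv k) ξs)
    (α : ℝ) (hα0 : 0 < α)
    (hα : α < 1/2 * (1 - Real.sqrt (1 - k ξs / k 0))) :
    4 * α * (1 - α) * k 0 / k 1 < 1 ∧
    ∀ ρ ρ' : ℝ → ℝ,
      (∀ ξ ∈ Icc (0:ℝ) 1, ρ ξ ∈ Icc (0:ℝ) 1) →
      (∀ ξ ∈ Icc (0:ℝ) 1, HasDerivWithinAt ρ (ρ' ξ) (Icc (0:ℝ) 1) ξ) →
      ContinuousOn ρ' (Icc (0:ℝ) 1) →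
      (∀ ξ ∈ Icc (0:ℝ) 1,
        (1 - 2 * ρ ξ) * ρ' ξ = -(deriv k ξ / k ξ) * ρ ξ * (1 - ρ ξ)) →
      ρ 0 = α →
      ρ 1 = 1/2 * (1 - Real.sqrt (1 - 4 * α * (1 - α) * k 0 / k 1)) := by
  have h0 : (0:ℝ) ∈ Icc (0:ℝ) 1 := ⟨le_refl _, zero_le_one⟩
  have h1 : (1:ℝ) ∈ Icc (0:ℝ) 1 := ⟨zero_le_one, le_refl _⟩
  have hk0 := hkpos 0 h0
  have hk1 := hkpos 1 h1
  have hmin' : ∀ x ∈ Icc (0:ℝ) 1, k ξs ≤ k x := by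
    intro x hx
    by_cases h : x = ξs
    · rw [h]
    · exact (hmin x hx h).le
  have hsq0 := Real.sqrt_nonneg (1 - k ξs / k 0)
  have hlt : 1 - k ξs / k 0 < (1 - 2 * α) ^ 2 := by
    have h2 : Real.sqrt (1 - k ξs / k 0) < 1 - 2 * α := by linarith
    exact (Real.sqrt_lt' (by linarith)).1 h2
  have hkey : 4 * α * (1 - α) * k 0 < k ξs := by
    have h2 : 4 * α * (1 - α) < k ξs / k 0 := by nlinarith
    exact (lt_div_iff₀ hk0).1 h2
  refine ⟨(div_lt_one hk1).2 (hkey.trans_le (hmin' 1 h1)), ?_⟩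
  intro ρ ρ' _ hd _ hode hρ0
  have hF : ∀ ξ ∈ Icc (0:ℝ) 1,
      HasDerivWithinAt (fun x => k x * (ρ x * (1 - ρ x))) 0 (Icc (0:ℝ) 1) ξ := by
    intro ξ hξ
    have hkd : HasDerivWithinAt k (deriv k ξ) (Icc (0:ℝ) 1) ξ :=
      ((hk.differentiable (by norm_num)) ξ).hasDerivAt.hasDerivWithinAt
    have h := hkd.mul ((hd ξ hξ).mul ((hd ξ hξ).const_sub 1))
    refine h.congr_deriv ?_
    have ho := hode ξ hξ
    have hkne := (hkpos ξ hξ).ne'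
    have ho2 : k ξ * ((1 - 2 * ρ ξ) * ρ' ξ) = -(deriv k ξ) * (ρ ξ * (1 - ρ ξ)) := by
      rw [ho]; field_simp
    simp only [Pi.mul_apply]
    linear_combination ho2
  have hconst : ∀ x ∈ Icc (0:ℝ) 1, k x * (ρ x * (1 - ρ x)) = k 0 * (ρ 0 * (1 - ρ 0)) := by
    refine constant_of_derivWithin_zero (f := fun x => k x * (ρ x * (1 - ρ x))) 
      (fun x hx => (hF x hx).differentiableWithinAt) ?_
    intro x hx
    have hx' : x ∈ Icc (0:ℝ) 1 := Ico_subset_Icc_self hx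
    exact (hF x hx').derivWithin (uniqueDiffOn_Icc zero_lt_one x hx')
  have hcont : ContinuousOn ρ (Icc (0:ℝ) 1) := fun x hx => (hd x hx).continuousWithinAt
  have hhalf : ρ 1 < 1 / 2 := by
    by_contra hge
    push Not at hge
    have hmem : (1/2:ℝ) ∈ Icc (ρ 0) (ρ 1) := ⟨by linarith, hge⟩
    obtain ⟨c, hc, hce⟩ := intermediate_value_Icc zero_le_one hcont hmem
    have h2 := hconst c hc
    have h3 := hmin' c hc
    rw [hce, hρ0] at h2
    nlinarith
  have h2 := hconst 1 h1
  rw [hρ0] at h2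
  have h3 : 1 - 4 * α * (1 - α) * k 0 / k 1 = (1 - 2 * ρ 1) ^ 2 := by
    field_simp
    linear_combination 4 * h2
  rw [h3, Real.sqrt_sq (by linarith)]
  ring
end

section
/- Let (α, β) belong to one of the eight open regions G_1, …, G_8. Then there exists ε_0 > 0 such that for every ε ∈ (0, ε_0) the stationary boundary value problem has exactly one solution; that is, there is exactly one twice continuously differentiable ρ : [0,1] → ℝ such that, with j(x) := −ε ρ'(x) + ρ(x)(1 − ρ(x)), the function x ↦ k(x) j(x) has zero derivative on [0,1], j(0) = α(1 − ρ(0)), and j(1) = β ρ(1). -/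
open Set

/-- The total flux `j(x) = -ε ρ'(x) + ρ(x)(1-ρ(x))` of a density profile `ρ` on `[0,1]`. -/
noncomputable def flux (ε : ℝ) (ρ : ℝ → ℝ) (x : ℝ) : ℝ :=
  -ε * derivWithin ρ (Icc (0:ℝ) 1) x + ρ x * (1 - ρ x)

/-- `ρ` is a (twice continuously differentiable) solution of the stationary boundary value
problem: `(k j)' = 0` on `[0,1]`, `j(0) = α(1-ρ(0))`, `j(1) = β ρ(1)`. -/
def IsStatSol (k : ℝ → ℝ) (ε α β : ℝ) (ρ : ℝ → ℝ) : Prop :=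
  ContDiffOn ℝ 2 ρ (Icc (0:ℝ) 1) ∧
  (∀ x ∈ Icc (0:ℝ) 1, derivWithin (fun y => k y * flux ε ρ y) (Icc (0:ℝ) 1) x = 0) ∧
  flux ε ρ 0 = α * (1 - ρ 0) ∧
  flux ε ρ 1 = β * ρ 1

/-- `ρ_c^0 = (1/2)(1 - √(1 - k(ξ*)/k(0)))`. -/
noncomputable def rhoC0 (k : ℝ → ℝ) (ξs : ℝ) : ℝ :=
  1/2 * (1 - Real.sqrt (1 - k ξs / k 0))

/-- `ρ_c^1 = (1/2)(1 + √(1 - k(ξ*)/k(1)))`. -/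
noncomputable def rhoC1 (k : ℝ → ℝ) (ξs : ℝ) : ℝ :=
  1/2 * (1 + Real.sqrt (1 - k ξs / k 1))

/-- `ρ*(α) = (1/2)(1 - √(1 - 4α(1-α)k(0)/k(1)))`. -/
noncomputable def rhoStar (k : ℝ → ℝ) (α : ℝ) : ℝ :=
  1/2 * (1 - Real.sqrt (1 - 4*α*(1-α) * k 0 / k 1))

/-- `ρ_*(β) = (1/2)(1 + √(1 - 4β(1-β)k(1)/k(0)))`. -/
noncomputable def rhoLowStar (k : ℝ → ℝ) (β : ℝ) : ℝ :=
  1/2 * (1 + Real.sqrt (1 - 4*β*(1-β) * k 1 / k 0))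

/-- The interior equation with boundary data, in first order form. -/
def FirstOrder (k : ℝ → ℝ) (ε α β J : ℝ) (ρ : ℝ → ℝ) : Prop :=
  (∀ x ∈ Icc (0:ℝ) 1, HasDerivWithinAt ρ ((ρ x * (1 - ρ x) - J / k x) / ε) (Icc (0:ℝ) 1) x) ∧
  J / k 0 = α * (1 - ρ 0) ∧ J / k 1 = β * ρ 1

lemma IsStatSol.firstOrder {k : ℝ → ℝ} {ε α β : ℝ} {ρ : ℝ → ℝ}
    (hk : ContDiff ℝ 2 k) (hkpos : ∀ x ∈ Icc (0:ℝ) 1, 0 < k x) (hε : 0 < ε)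
    (h : IsStatSol k ε α β ρ) : ∃ J, FirstOrder k ε α β J ρ := by
  obtain ⟨hC, hd, h0, h1⟩ := h
  have hu : UniqueDiffOn ℝ (Icc (0:ℝ) 1) := uniqueDiffOn_Icc one_pos
  have hC' : ContDiffOn ℝ 1 (derivWithin ρ (Icc (0:ℝ) 1)) (Icc (0:ℝ) 1) :=
    hC.derivWithin hu (by norm_num)
  have hρd : DifferentiableOn ℝ ρ (Icc (0:ℝ) 1) := hC.differentiableOn (by norm_num)
  have hdd := hC'.differentiableOn (by norm_num)
  have hkd : DifferentiableOn ℝ k (Icc (0:ℝ) 1) :=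
    (hk.differentiable (by norm_num)).differentiableOn
  have hfl : DifferentiableOn ℝ (fun y => k y * flux ε ρ y) (Icc (0:ℝ) 1) := by
    unfold flux
    fun_prop
  have hconst := constant_of_derivWithin_zero hfl (fun x hx => hd x (Ico_subset_Icc_self hx))
  set J := k 0 * flux ε ρ 0 with hJ
  have hj : ∀ x ∈ Icc (0:ℝ) 1, flux ε ρ x = J / k x := by
    intro x hx
    have := hconst x hx
    rw [eq_div_iff (hkpos x hx).ne', ← this]
    ring
  refine ⟨J, fun x hx => ?_, ?_, ?_⟩
  · have h2 := (hρd x hx).hasDerivWithinAt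
    have h3 := hj x hx
    have h4 : derivWithin ρ (Icc (0:ℝ) 1) x = (ρ x * (1 - ρ x) - J / k x) / ε := by
      rw [← h3, flux]
      field_simp
      ring
    rwa [h4] at h2
  · rw [← hj 0 (by simp), h0]
  · rw [← hj 1 (by simp), h1]

lemma FirstOrder.isStatSol {k : ℝ → ℝ} {ε α β J : ℝ} {ρ : ℝ → ℝ}
    (hk : ContDiff ℝ 2 k) (hkpos : ∀ x ∈ Icc (0:ℝ) 1, 0 < k x) (hε : 0 < ε)
    (h : FirstOrder k ε α β J ρ) : IsStatSol k ε α β ρ := by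
  obtain ⟨hd, h0, h1⟩ := h
  have hu : UniqueDiffOn ℝ (Icc (0:ℝ) 1) := uniqueDiffOn_Icc one_pos
  have hdw : ∀ x ∈ Icc (0:ℝ) 1,
      derivWithin ρ (Icc (0:ℝ) 1) x = (ρ x * (1 - ρ x) - J / k x) / ε :=
    fun x hx => (hd x hx).derivWithin (hu x hx)
  have hρd : DifferentiableOn ℝ ρ (Icc (0:ℝ) 1) := fun x hx => (hd x hx).differentiableWithinAt
  have hkn : ∀ x ∈ Icc (0:ℝ) 1, k x ≠ 0 := fun x hx => (hkpos x hx).ne'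
  have hk1 : ContDiffOn ℝ 1 k (Icc (0:ℝ) 1) := (hk.of_le (by norm_num)).contDiffOn
  have step : ∀ n : ℕ, n ≤ 1 → ContDiffOn ℝ n ρ (Icc (0:ℝ) 1) →
      ContDiffOn ℝ (n + 1) ρ (Icc (0:ℝ) 1) := by
    intro n hn hcn
    rw [contDiffOn_succ_iff_derivWithin hu]
    refine ⟨hρd, by simp, ?_⟩
    refine ContDiffOn.congr ?_ hdw
    have hkn' : ContDiffOn ℝ n k (Icc (0:ℝ) 1) := hk1.of_le (by exact_mod_cast hn)
    exact ((hcn.mul (contDiffOn_const.sub hcn)).sub (contDiffOn_const.div hkn' hkn)).div_const ε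
  have hc0 : ContDiffOn ℝ (0:ℕ) ρ (Icc (0:ℝ) 1) := by
    simpa using hρd.continuousOn
  have hc1 := step 0 (by norm_num) hc0
  have hc2 := step 1 le_rfl (by simpa using hc1)
  have hfl : ∀ x ∈ Icc (0:ℝ) 1, flux ε ρ x = J / k x := by
    intro x hx
    rw [flux, hdw x hx]
    field_simp
    ring
  refine ⟨?_, ?_, ?_, ?_⟩
  · convert hc2 using 1
    norm_num
  · intro x hx
    have : EqOn (fun y => k y * flux ε ρ y) (fun _ => J) (Icc (0:ℝ) 1) := by
      intro y hy
      simp only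
      rw [hfl y hy, mul_div_cancel₀ _ (hkn y hy)]
    rw [derivWithin_congr this (this hx)]
    simp
  · rw [hfl 0 (by simp), h0]
  · rw [hfl 1 (by simp), h1]

lemma right_deriv {f : ℝ → ℝ} {f' x : ℝ} (hx : x ∈ Ico (0:ℝ) 1)
    (h : HasDerivWithinAt f f' (Icc (0:ℝ) 1) x) : HasDerivWithinAt f f' (Ici x) x :=
  h.mono_of_mem_nhdsWithin (Icc_mem_nhdsGE_of_mem hx)

/-- Linear differential inequality: `w' ≥ a w` and `w 0 ≥ 0` imply `w ≥ 0`. -/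
lemma nonneg_of_linear {w w' a : ℝ → ℝ} {M : ℝ}
    (hw : ∀ x ∈ Icc (0:ℝ) 1, HasDerivWithinAt w (w' x) (Icc (0:ℝ) 1) x)
    (ha : ∀ x ∈ Icc (0:ℝ) 1, |a x| ≤ M)
    (hle : ∀ x ∈ Icc (0:ℝ) 1, a x * w x ≤ w' x) (h0 : 0 ≤ w 0) :
    ∀ x ∈ Icc (0:ℝ) 1, 0 ≤ w x := by
  have key : ∀ δ > 0, ∀ x ∈ Icc (0:ℝ) 1, -w x ≤ δ * Real.exp ((M + 1) * x) := by
    intro δ hδ x hx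
    have hB : ∀ y : ℝ, HasDerivAt (fun y => δ * Real.exp ((M + 1) * y))
        (δ * (Real.exp ((M + 1) * y) * ((M + 1) * 1))) y := fun y =>
      (((hasDerivAt_id y).const_mul (M + 1)).exp).const_mul δ
    refine image_le_of_deriv_right_lt_deriv_boundary' (f := fun x => -w x) (f' := fun x => -w' x)
      (a := 0) (b := 1) (B := fun y => δ * Real.exp ((M + 1) * y))
      (B' := fun y => δ * (Real.exp ((M + 1) * y) * ((M + 1) * 1)))
      ?_ ?_ ?_ ?_ ?_ ?_ hx
    · exact fun y hy => (hw y hy).neg.continuousWithinAt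
    · exact fun y hy => right_deriv hy (hw y (Ico_subset_Icc_self hy)).neg
    · simp; linarith
    · fun_prop
    · exact fun y _ => (hB y).hasDerivWithinAt
    · intro y hy hyw
      have hyI := Ico_subset_Icc_self hy
      have h1 := hle y hyI
      have h2 := abs_le.1 (ha y hyI)
      have h3 : 0 < δ * Real.exp ((M + 1) * y) := by positivity
      have h4 : w y = -(δ * Real.exp ((M + 1) * y)) := by linarith
      rw [h4] at h1
      nlinarith
  intro x hx
  by_contra hneg
  push Not at hneg
  have hE := Real.exp_pos ((M + 1) * x)
  have := key (-w x / (2 * Real.exp ((M + 1) * x))) (div_pos (by linarith) (by linarith)) x hx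
  have h2 : -w x / (2 * Real.exp ((M + 1) * x)) * Real.exp ((M + 1) * x) = -w x / 2 := by
    field_simp
  linarith

lemma FirstOrder.mono {k : ℝ → ℝ} {ε α β J₁ J₂ : ℝ} {ρ σ : ℝ → ℝ}
    (hkpos : ∀ x ∈ Icc (0:ℝ) 1, 0 < k x) (hε : 0 < ε) (hα : 0 < α)
    (h₁ : FirstOrder k ε α β J₁ ρ) (h₂ : FirstOrder k ε α β J₂ σ) (hJ : J₁ ≤ J₂) :
    ∀ x ∈ Icc (0:ℝ) 1, σ x ≤ ρ x := by
  have hc : ContinuousOn (fun x => (1 - ρ x - σ x) / ε) (Icc (0:ℝ) 1) := by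
    have c1 : ContinuousOn ρ (Icc (0:ℝ) 1) := fun x hx => (h₁.1 x hx).continuousWithinAt
    have c2 : ContinuousOn σ (Icc (0:ℝ) 1) := fun x hx => (h₂.1 x hx).continuousWithinAt
    fun_prop
  obtain ⟨M, hM⟩ := isCompact_Icc.exists_bound_of_continuousOn hc
  have := nonneg_of_linear (w := fun x => ρ x - σ x) (a := fun x => (1 - ρ x - σ x) / ε) (M := M)
    (fun x hx => (h₁.1 x hx).sub (h₂.1 x hx)) hM ?_ ?_
  · intro x hx
    linarith [this x hx]
  · intro x hx
    have hkx := hkpos x hx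
    have h5 : J₁ / k x ≤ J₂ / k x := by gcongr
    rw [div_mul_eq_mul_div, ← sub_div]
    gcongr
    nlinarith
  · have hk0 := hkpos 0 (by simp)
    have h5 : J₁ / k 0 ≤ J₂ / k 0 := by gcongr
    rw [h₁.2.1, h₂.2.1] at h5
    have := le_of_mul_le_mul_left h5 hα
    linarith

lemma FirstOrder.unique {k : ℝ → ℝ} {ε α β J₁ J₂ : ℝ} {ρ σ : ℝ → ℝ}
    (hkpos : ∀ x ∈ Icc (0:ℝ) 1, 0 < k x) (hε : 0 < ε) (hα : 0 < α) (hβ : 0 < β)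
    (h₁ : FirstOrder k ε α β J₁ ρ) (h₂ : FirstOrder k ε α β J₂ σ) :
    EqOn ρ σ (Icc (0:ℝ) 1) := by
  wlog hJ : J₁ ≤ J₂ generalizing J₁ J₂ ρ σ
  · exact (this h₂ h₁ (le_of_not_ge hJ)).symm
  have hm := h₁.mono hkpos hε hα h₂ hJ
  have hk1 := hkpos 1 (by simp)
  have h5 : β * σ 1 ≤ β * ρ 1 := by
    have := hm 1 (by simp)
    gcongr
  rw [← h₁.2.2, ← h₂.2.2] at h5
  have hJ' : J₂ ≤ J₁ := (div_le_div_iff_of_pos_right hk1).1 h5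
  have hm' := h₂.mono hkpos hε hα h₁ hJ'
  exact fun x hx => le_antisymm (hm' x hx) (hm x hx)

/-- Clamp to `[0,1]`. -/
noncomputable def clamp (p : ℝ) : ℝ := max 0 (min p 1)

/-- Truncated nonlinearity. -/
noncomputable def gTr (p : ℝ) : ℝ := clamp p * (1 - clamp p)

lemma clamp_mem (p : ℝ) : 0 ≤ clamp p ∧ clamp p ≤ 1 := by
  unfold clamp; simp

lemma clamp_lip (p q : ℝ) : |clamp p - clamp q| ≤ |p - q| := by
  unfold clamp
  have h1 := abs_max_sub_max_le_abs (min p 1) (min q 1) 0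
  have h2 := abs_min_sub_min_le_max p 1 q 1
  rw [max_comm 0, max_comm 0]
  refine h1.trans (h2.trans ?_)
  simp

lemma gTr_lip (p q : ℝ) : |gTr p - gTr q| ≤ |p - q| := by
  have h1 := clamp_mem p
  have h2 := clamp_mem q
  have : gTr p - gTr q = (clamp p - clamp q) * (1 - clamp p - clamp q) := by
    unfold gTr; ring
  rw [this, abs_mul]
  have h3 : |1 - clamp p - clamp q| ≤ 1 := abs_le.2 ⟨by linarith, by linarith⟩
  have h4 := clamp_lip p q
  nlinarith [abs_nonneg (clamp p - clamp q), abs_nonneg (1 - clamp p - clamp q)]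

lemma gTr_bound (p : ℝ) : |gTr p| ≤ 1 := by
  have h1 := clamp_mem p
  unfold gTr
  exact abs_le.2 ⟨by nlinarith, by nlinarith⟩

lemma gTr_nonpos {p : ℝ} (h : p ≤ 0) : gTr p = 0 := by
  have : clamp p = 0 := by
    unfold clamp
    exact max_eq_left ((min_le_left _ _).trans h)
  simp [gTr, this]

lemma gTr_mem {p : ℝ} (h : 0 ≤ p) (h' : p ≤ 1) : gTr p = p * (1 - p) := by
  have : clamp p = p := by
    unfold clamp
    rw [min_eq_left h', max_eq_right h]
  simp [gTr, this]

lemma exists_trunc {q : ℝ → ℝ} (hq : ContinuousOn q (Icc (0:ℝ) 1)) {ε : ℝ} (hε : 0 < ε)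
    (J p₀ : ℝ) : ∃ ρ : ℝ → ℝ, ρ 0 = p₀ ∧ ∀ x ∈ Icc (0:ℝ) 1,
      HasDerivWithinAt ρ ((gTr (ρ x) - J * q x) / ε) (Icc (0:ℝ) 1) x := by
  obtain ⟨C, hC⟩ := isCompact_Icc.exists_bound_of_continuousOn hq
  have hC0 : 0 ≤ C := (norm_nonneg _).trans (hC 0 (by simp))
  let L : NNReal := ⟨(1 + |J| * C) / ε, by positivity⟩
  have hP : IsPicardLindelof (fun x p => (gTr p - J * q x) / ε)
      (⟨0, by simp⟩ : Icc (0:ℝ) 1) p₀ L 0 L ⟨1 / ε, by positivity⟩ := by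
    constructor
    · intro t _
      apply LipschitzWith.lipschitzOnWith
      apply LipschitzWith.of_dist_le_mul
      intro x y
      have h := gTr_lip x y
      rw [Real.dist_eq, Real.dist_eq]
      have : (gTr x - J * q t) / ε - (gTr y - J * q t) / ε = (1 / ε) * (gTr x - gTr y) := by
        field_simp; ring
      rw [this, abs_mul, abs_of_pos (by positivity : 0 < 1 / ε)]
      show _ ≤ 1 / ε * |x - y|
      gcongr
    · intro x _
      fun_prop
    · intro t ht x _
      show _ ≤ (1 + |J| * C) / ε
      rw [Real.norm_eq_abs, abs_div, abs_of_pos hε]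
      gcongr
      refine (abs_sub _ _).trans ?_
      rw [abs_mul]
      have h1 := gTr_bound x
      have h2 : |q t| ≤ C := hC t ht
      gcongr
    · simp
  exact hP.exists_eq_forall_mem_Icc_hasDerivWithinAt₀

lemma exists_firstOrder {k : ℝ → ℝ} {ε α β : ℝ} (hk : ContDiff ℝ 2 k)
    (hkpos : ∀ x ∈ Icc (0:ℝ) 1, 0 < k x) (hε : 0 < ε) (hα : 0 < α) (hβ : 0 < β) :
    ∃ J ρ, FirstOrder k ε α β J ρ := by
  have hk0 := hkpos 0 (by simp)
  have hk1 := hkpos 1 (by simp)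
  have hq : ContinuousOn (fun x => (k x)⁻¹) (Icc (0:ℝ) 1) :=
    hk.continuous.continuousOn.inv₀ fun x hx => (hkpos x hx).ne'
  obtain ⟨C, hC⟩ := isCompact_Icc.exists_bound_of_continuousOn hq
  have hC0 : 0 ≤ C := (norm_nonneg _).trans (hC 0 (by simp))
  choose R hR0 hR using fun J : ℝ => exists_trunc hq hε J (1 - J / (α * k 0))
  have hRc : ∀ J, ContinuousOn (R J) (Icc (0:ℝ) 1) := fun J x hx => (hR J x hx).continuousWithinAt
  have hRr : ∀ J, ∀ x ∈ Ico (0:ℝ) 1,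
      HasDerivWithinAt (R J) ((gTr (R J x) - J * (k x)⁻¹) / ε) (Ici x) x :=
    fun J x hx => right_deriv hx (hR J x (Ico_subset_Icc_self hx))
  -- continuity of the shooting map
  have hcont : Continuous fun J => R J 1 := by
    let K : NNReal := ⟨1 / ε, by positivity⟩
    have hK : (K : ℝ) ≠ 0 := by
      show (1 / ε : ℝ) ≠ 0
      positivity
    have hlip : ∀ J₁ J₂, dist (R J₁ 1) (R J₂ 1) ≤
        gronwallBound (|J₁ - J₂| / (α * k 0)) K (|J₁ - J₂| * C / ε + 0) (1 - 0) := by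
      intro J₁ J₂
      refine dist_le_of_approx_trajectories_ODE (v := fun x p => (gTr p - J₂ * (k x)⁻¹) / ε)
        ?_ (hRc J₁) (hRr J₁) ?_ (hRc J₂) (hRr J₂) ?_ ?_ 1 (by simp)
      · intro t
        apply LipschitzWith.of_dist_le_mul
        intro x y
        have h := gTr_lip x y
        rw [Real.dist_eq, Real.dist_eq]
        have : (gTr x - J₂ * (k t)⁻¹) / ε - (gTr y - J₂ * (k t)⁻¹) / ε
            = (1 / ε) * (gTr x - gTr y) := by ring
        rw [this, abs_mul, abs_of_pos (by positivity : 0 < 1 / ε)]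
        show _ ≤ 1 / ε * |x - y|
        gcongr
      · intro t ht
        have h2 : |(k t)⁻¹| ≤ C := hC t (Ico_subset_Icc_self ht)
        rw [Real.dist_eq]
        have : (gTr (R J₁ t) - J₁ * (k t)⁻¹) / ε - (gTr (R J₁ t) - J₂ * (k t)⁻¹) / ε
            = -((J₁ - J₂) * (k t)⁻¹ / ε) := by ring
        rw [this, abs_neg, abs_div, abs_mul, abs_of_pos hε]
        gcongr
      · intro t _
        simp
      · rw [hR0, hR0, Real.dist_eq]
        have : 1 - J₁ / (α * k 0) - (1 - J₂ / (α * k 0)) = -((J₁ - J₂) / (α * k 0)) := by ring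
        rw [this, abs_neg, abs_div, abs_of_pos (by positivity : 0 < α * k 0)]
    rw [continuous_iff_continuousAt]
    intro J₀
    rw [ContinuousAt, tendsto_iff_dist_tendsto_zero]
    refine squeeze_zero (fun _ => dist_nonneg) (fun J => hlip J J₀) ?_
    simp only [gronwallBound_of_K_ne_0 hK]
    have : Continuous fun J => |J - J₀| / (α * k 0) * Real.exp (K * (1 - 0)) +
      (|J - J₀| * C / ε + 0) / K * (Real.exp (K * (1 - 0)) - 1) := by fun_prop
    have h := this.tendsto J₀
    simpa using h
  -- solutions cannot cross a nonpositive level upwards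
  have hdown : ∀ J > 0, ∀ x₀ ∈ Icc (0:ℝ) 1, R J x₀ ≤ 0 → R J 1 ≤ R J x₀ := by
    intro J hJ x₀ hx₀ hle
    refine image_le_of_deriv_right_lt_deriv_boundary' (f := R J)
      (f' := fun x => (gTr (R J x) - J * (k x)⁻¹) / ε)
      (a := x₀) (b := 1) (B := fun _ => R J x₀) (B' := fun _ => 0)
      ((hRc J).mono (Icc_subset_Icc_left hx₀.1))
      (fun x hx => hRr J x ⟨hx₀.1.trans hx.1, hx.2⟩) le_rfl continuousOn_const
      (fun x _ => hasDerivWithinAt_const _ _ _) ?_ (right_mem_Icc.2 hx₀.2)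
    intro x hx hxe
    have hkx := hkpos x ⟨hx₀.1.trans hx.1, hx.2.le⟩
    rw [hxe, gTr_nonpos hle]
    apply div_neg_of_neg_of_pos _ hε
    have : 0 < J * (k x)⁻¹ := by positivity
    linarith
  have hup : ∀ J > 0, ∀ x ∈ Icc (0:ℝ) 1, R J x ≤ 1 := by
    intro J hJ x hx
    refine image_le_of_deriv_right_lt_deriv_boundary' (f := R J)
      (f' := fun x => (gTr (R J x) - J * (k x)⁻¹) / ε)
      (a := 0) (b := 1) (B := fun _ => 1) (B' := fun _ => 0)
      (hRc J) (hRr J) ?_ continuousOn_const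
      (fun x _ => hasDerivWithinAt_const _ _ _) ?_ hx
    · rw [hR0]
      have : 0 < J / (α * k 0) := by positivity
      linarith
    · intro x hx hxe
      have hkx := hkpos x (Ico_subset_Icc_self hx)
      rw [hxe, gTr_mem zero_le_one le_rfl]
      apply div_neg_of_neg_of_pos _ hε
      have : 0 < J * (k x)⁻¹ := by positivity
      linarith
  have hzero : 1 / 2 ≤ R 0 1 := by
    have := image_le_of_deriv_right_lt_deriv_boundary' (f := fun x => -R 0 x)
      (f' := fun x => -((gTr (R 0 x) - 0 * (k x)⁻¹) / ε))
      (a := 0) (b := 1) (B := fun _ => -(1 / 2)) (B' := fun _ => 0)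
      (hRc 0).neg (fun x hx => (hRr 0 x hx).neg) ?_ continuousOn_const
      (fun x _ => hasDerivWithinAt_const _ _ _) ?_ (right_mem_Icc.2 zero_le_one)
    · linarith
    · rw [hR0]; norm_num
    · intro x hx hxe
      have hxe' : R 0 x = 1 / 2 := by linarith
      simp only [hxe']
      rw [gTr_mem (by norm_num) (by norm_num)]
      have : 0 < ((1:ℝ) / 2 * (1 - 1 / 2) - 0 * (k x)⁻¹) / ε := by
        apply div_pos _ hε
        norm_num
      linarith
  have hαk : 0 < α * k 0 := by positivity
  have hβk : 0 < β * k 1 := by positivity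
  have hlast : R (α * k 0) 1 ≤ 0 := by
    have h0 : R (α * k 0) 0 = 0 := by rw [hR0, div_self hαk.ne', sub_self]
    have := hdown _ hαk 0 (by simp) h0.le
    rwa [h0] at this
  obtain ⟨J, hJ, hJe⟩ : (0:ℝ) ∈ (fun J => R J 1 - J / (β * k 1)) '' Icc 0 (α * k 0) := by
    refine intermediate_value_Icc' hαk.le (Continuous.continuousOn (by fun_prop)) ⟨?_, ?_⟩
    · have : 0 < α * k 0 / (β * k 1) := by positivity
      linarith
    · simp only [zero_div]
      linarith
  simp only at hJe
  have hJpos : 0 < J := by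
    refine lt_of_le_of_ne hJ.1 ?_
    rintro rfl
    rw [zero_div] at hJe
    linarith
  have hend : R J 1 = J / (β * k 1) := by linarith
  have hendpos : 0 < R J 1 := by rw [hend]; positivity
  have hnn : ∀ x ∈ Icc (0:ℝ) 1, 0 ≤ R J x := by
    intro x hx
    by_contra hneg
    push Not at hneg
    linarith [hdown J hJpos x hx hneg.le]
  refine ⟨J, R J, ?_, ?_, ?_⟩
  · intro x hx
    have h := hR J x hx
    rwa [gTr_mem (hnn x hx) (hup J hJpos x hx), ← div_eq_mul_inv] at h
  · rw [hR0]
    field_simp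
    ring
  · rw [hend]
    field_simp

lemma rhoC0_pos {k : ℝ → ℝ} {ξs : ℝ} (h0 : 0 < k 0) (hs : 0 < k ξs) : 0 < rhoC0 k ξs := by
  unfold rhoC0
  have : Real.sqrt (1 - k ξs / k 0) < 1 := by
    rw [Real.sqrt_lt' one_pos]
    have : 0 < k ξs / k 0 := by positivity
    linarith
  linarith

lemma rhoC1_lt_one {k : ℝ → ℝ} {ξs : ℝ} (h1 : 0 < k 1) (hs : 0 < k ξs) : rhoC1 k ξs < 1 := by
  unfold rhoC1
  have : Real.sqrt (1 - k ξs / k 1) < 1 := by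
    rw [Real.sqrt_lt' one_pos]
    have : 0 < k ξs / k 1 := by positivity
    linarith
  linarith

lemma rhoC1_ge {k : ℝ → ℝ} {ξs : ℝ} : 1 / 2 ≤ rhoC1 k ξs := by
  unfold rhoC1
  have := Real.sqrt_nonneg (1 - k ξs / k 1)
  linarith

lemma rhoC0_le {k : ℝ → ℝ} {ξs : ℝ} : rhoC0 k ξs ≤ 1 / 2 := by
  unfold rhoC0
  have := Real.sqrt_nonneg (1 - k ξs / k 0)
  linarith

lemma rhoStar_bounds {k : ℝ → ℝ} {α : ℝ} (h0 : 0 < k 0) (h1 : 0 < k 1) (ha : 0 < α)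
    (ha' : α < 1) : 0 ≤ rhoStar k α ∧ rhoStar k α ≤ 1 / 2 := by
  unfold rhoStar
  have h2 := Real.sqrt_nonneg (1 - 4*α*(1-α) * k 0 / k 1)
  have h3 : Real.sqrt (1 - 4*α*(1-α) * k 0 / k 1) ≤ 1 := by
    refine Real.sqrt_le_iff.2 ⟨zero_le_one, ?_⟩
    have : 0 < 1 - α := by linarith
    have : 0 < 4*α*(1-α) * k 0 / k 1 := by positivity
    linarith
  constructor <;> linarith

lemma rhoLowStar_bounds {k : ℝ → ℝ} {β : ℝ} (h0 : 0 < k 0) (h1 : 0 < k 1) (ha : 0 < β)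
    (ha' : β < 1) : 1 / 2 ≤ rhoLowStar k β ∧ rhoLowStar k β ≤ 1 := by
  unfold rhoLowStar
  have h2 := Real.sqrt_nonneg (1 - 4*β*(1-β) * k 1 / k 0)
  have h3 : Real.sqrt (1 - 4*β*(1-β) * k 1 / k 0) ≤ 1 := by
    refine Real.sqrt_le_iff.2 ⟨zero_le_one, ?_⟩
    have : 0 < 1 - β := by linarith
    have : 0 < 4*β*(1-β) * k 1 / k 0 := by positivity
    linarith
  constructor <;> linarith

/-- For `(α,β)` in any of the eight open parameter regions `G_1,…,G_8`,
there is `ε₀ > 0` such that for all `0 < ε < ε₀` the stationary boundary value problem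
has exactly one solution (unique as a function on `[0,1]`). -/
theorem bvp_existence_uniqueness
    (k : ℝ → ℝ) (ξs : ℝ)
    (hk : ContDiff ℝ 2 k)
    (hkpos : ∀ x ∈ Icc (0:ℝ) 1, 0 < k x)
    (hξs : ξs ∈ Ioo (0:ℝ) 1)
    (hmin : ∀ x ∈ Icc (0:ℝ) 1, x ≠ ξs → k ξs < k x)
    (hk's : deriv k ξs = 0)
    (hk''s : 0 < deriv (deriv k) ξs)
    (α β : ℝ)
    (hreg :
      -- G_1
      (0 < α ∧ α < rhoC0 k ξs ∧ rhoStar k α < β ∧ β < 1 - rhoStar k α) ∨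
      -- G_2
      (0 < α ∧ α < rhoC0 k ξs ∧ 1 - rhoStar k α < β ∧ β < 1) ∨
      -- G_3
      (rhoC0 k ξs < α ∧ α < 1 - rhoC0 k ξs ∧ 1 - rhoC1 k ξs < β ∧ β < rhoC1 k ξs) ∨
      -- G_4
      (rhoC0 k ξs < α ∧ α < 1 - rhoC0 k ξs ∧ rhoC1 k ξs < β ∧ β < 1) ∨
      -- G_5
      (1 - rhoC0 k ξs < α ∧ α < 1 ∧ 1 - rhoC1 k ξs < β ∧ β < rhoC1 k ξs) ∨
      -- G_6
      (1 - rhoC0 k ξs < α ∧ α < 1 ∧ rhoC1 k ξs < β ∧ β < 1) ∨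
      -- G_7
      (1 - rhoLowStar k β < α ∧ α < rhoLowStar k β ∧ 0 < β ∧ β < 1 - rhoC1 k ξs) ∨
      -- G_8
      (rhoLowStar k β < α ∧ α < 1 ∧ 0 < β ∧ β < 1 - rhoC1 k ξs)) :
    ∃ ε₀ > 0, ∀ ε : ℝ, 0 < ε → ε < ε₀ →
      ∃ ρ : ℝ → ℝ, IsStatSol k ε α β ρ ∧
        ∀ σ : ℝ → ℝ, IsStatSol k ε α β σ → EqOn σ ρ (Icc (0:ℝ) 1) := by
  have hk0 := hkpos 0 (by simp)
  have hk1 := hkpos 1 (by simp)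
  have hks := hkpos ξs (Ioo_subset_Icc_self hξs)
  have a1 := rhoC0_pos hk0 hks
  have a2 := rhoC1_lt_one hk1 hks
  have a3 := rhoC1_ge (k := k) (ξs := ξs)
  have a4 := rhoC0_le (k := k) (ξs := ξs)
  have hpos : 0 < α ∧ 0 < β := by
    rcases hreg with h | h | h | h | h | h | h | h
    · have := rhoStar_bounds hk0 hk1 h.1 (by linarith)
      exact ⟨h.1, by linarith⟩
    · have := rhoStar_bounds hk0 hk1 h.1 (by linarith)
      exact ⟨h.1, by linarith⟩
    · exact ⟨by linarith, by linarith⟩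
    · exact ⟨by linarith, by linarith⟩
    · exact ⟨by linarith, by linarith⟩
    · exact ⟨by linarith, by linarith⟩
    · have := rhoLowStar_bounds hk0 hk1 h.2.2.1 (by linarith)
      exact ⟨by linarith, h.2.2.1⟩
    · have := rhoLowStar_bounds hk0 hk1 h.2.2.1 (by linarith)
      exact ⟨by linarith, h.2.2.1⟩
  obtain ⟨hα, hβ⟩ := hpos
  refine ⟨1, one_pos, fun ε hε _ => ?_⟩
  obtain ⟨J, ρ, h⟩ := exists_firstOrder hk hkpos hε hα hβ
  refine ⟨ρ, h.isStatSol hk hkpos hε, fun σ hσ => ?_⟩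
  obtain ⟨J', h'⟩ := hσ.firstOrder hk hkpos hε
  exact h'.unique hkpos hε hα hβ h
end

section
/- Let 0 < α < ρ_c^0 and ρ*(α) < β < 1 with β ≠ 1 − ρ*(α), where ρ*(α) := (1/2)(1 − √(1 − 4α(1−α)k(0)/k(1))) (the low-density parameter regions G_1 and G_2). Then for every δ > 0 and every x ∈ (0,1) there exists ε_0 > 0 such that for every ε ∈ (0, ε_0) and every twice continuously differentiable ρ : [0,1] → ℝ solving the stationary boundary value problem one has |ρ(0) − α| < δ, |ρ(x) − (1/2)(1 − √(1 − 4α(1−α)k(0)/k(x)))| < δ, and |ρ(1) − α(1−α)k(0)/(β k(1))| < δ; i.e., as ε → 0 the solution converges to the low-density reduced orbit starting at ρ = α, with a boundary layer only at the exit x = 1. -/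
open Set

/-- Reduced first-order form of the problem. -/
structure Sol (k : ℝ → ℝ) (ε α β J : ℝ) (ρ : ℝ → ℝ) : Prop where
  eps : 0 < ε
  kpos : ∀ x ∈ Icc (0:ℝ) 1, 0 < k x
  der : ∀ t ∈ Icc (0:ℝ) 1,
    HasDerivWithinAt ρ ((ρ t * (1 - ρ t) - J / k t) / ε) (Icc (0:ℝ) 1) t
  h0 : J = k 0 * (α * (1 - ρ 0))
  h1 : J = k 1 * (β * ρ 1)

lemma Sol.right {k : ℝ → ℝ} {ε α β J : ℝ} {ρ : ℝ → ℝ} (h : Sol k ε α β J ρ) {t : ℝ}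
    (h0 : 0 ≤ t) (h1 : t < 1) :
    HasDerivWithinAt ρ ((ρ t * (1 - ρ t) - J / k t) / ε) (Ici t) t := by
  have h2 := (h.der t ⟨h0, h1.le⟩).mono (Icc_subset_Icc_left h0 : Icc t 1 ⊆ Icc 0 1)
  exact h2.mono_of_mem_nhdsWithin (Icc_mem_nhdsGE h1)

lemma Sol.cont {k : ℝ → ℝ} {ε α β J : ℝ} {ρ : ℝ → ℝ} (h : Sol k ε α β J ρ) :
    ContinuousOn ρ (Icc 0 1) := fun t ht => (h.der t ht).continuousWithinAt

lemma line_der (p s a t : ℝ) (S : Set ℝ) :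
    HasDerivWithinAt (fun t => p + s * (t - a)) s S t := by
  have := (((hasDerivAt_id t).sub_const a).const_mul s).const_add p
  simpa using this.hasDerivWithinAt

lemma Sol.up {k : ℝ → ℝ} {ε α β J : ℝ} {ρ : ℝ → ℝ} (h : Sol k ε α β J ρ) {a c p s : ℝ}
    (ha : 0 ≤ a) (hac : a ≤ c) (hc : c ≤ 1) (hp : p ≤ ρ a)
    (hb : ∀ t ∈ Icc a c, ε * s < (p + s * (t - a)) * (1 - (p + s * (t - a))) - J / k t) :
    p + s * (c - a) ≤ ρ c := by
  refine image_le_of_deriv_right_lt_deriv_boundary' (f := fun t => p + s * (t - a))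
    (f' := fun _ => s) (B := ρ) (B' := fun t => (ρ t * (1 - ρ t) - J / k t) / ε)
    (by fun_prop) (fun t _ => line_der p s a t _) (by simpa using hp)
    (h.cont.mono (Icc_subset_Icc ha hc))
    (fun t ht => h.right (ha.trans ht.1) (ht.2.trans_le hc)) ?_ ⟨hac, le_rfl⟩
  intro t ht he
  have := hb t ⟨ht.1, ht.2.le⟩
  rw [lt_div_iff₀ h.eps]
  rw [he] at this
  linarith

lemma Sol.down {k : ℝ → ℝ} {ε α β J : ℝ} {ρ : ℝ → ℝ} (h : Sol k ε α β J ρ) {a c p s : ℝ}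
    (ha : 0 ≤ a) (hac : a ≤ c) (hc : c ≤ 1) (hp : ρ a ≤ p)
    (hb : ∀ t ∈ Icc a c, (p + s * (t - a)) * (1 - (p + s * (t - a))) - J / k t < ε * s) :
    ρ c ≤ p + s * (c - a) := by
  refine image_le_of_deriv_right_lt_deriv_boundary' (B := fun t => p + s * (t - a))
    (B' := fun _ => s) (f := ρ) (f' := fun t => (ρ t * (1 - ρ t) - J / k t) / ε)
    (h.cont.mono (Icc_subset_Icc ha hc))
    (fun t ht => h.right (ha.trans ht.1) (ht.2.trans_le hc)) (by simpa using hp)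
    (by fun_prop) (fun t _ => line_der p s a t _) ?_ ⟨hac, le_rfl⟩
  intro t ht he
  have := hb t ⟨ht.1, ht.2.le⟩
  rw [div_lt_iff₀ h.eps]
  rw [← he] at this
  linarith

lemma Sol.J_pos {k : ℝ → ℝ} {ε α β J : ℝ} {ρ : ℝ → ℝ} (h : Sol k ε α β J ρ)
    (hα : 0 < α) (hβ : 0 < β) : 0 < J := by
  by_contra hJ
  push Not at hJ
  have k0 := h.kpos 0 (by simp)
  have k1 := h.kpos 1 (by simp)
  have r0 : 1 ≤ ρ 0 := by
    by_contra hh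
    push Not at hh
    have : 0 < k 0 * (α * (1 - ρ 0)) := by
      have : 0 < 1 - ρ 0 := by linarith
      positivity
    linarith [h.h0]
  have r1 : ρ 1 ≤ 0 := by
    by_contra hh
    push Not at hh
    have : 0 < k 1 * (β * ρ 1) := by positivity
    linarith [h.h1]
  have := h.up (a := 0) (c := 1) (p := 1/2) (s := 0) le_rfl zero_le_one le_rfl (by linarith) (by
    intro t ht
    have : J / k t ≤ 0 := div_nonpos_of_nonpos_of_nonneg hJ (h.kpos t ht).le
    norm_num
    linarith)
  linarith

lemma Sol.pos {k : ℝ → ℝ} {ε α β J : ℝ} {ρ : ℝ → ℝ} (h : Sol k ε α β J ρ)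
    (hα : 0 < α) (hβ : 0 < β) {t : ℝ} (ht : t ∈ Icc (0:ℝ) 1) : 0 < ρ t := by
  by_contra hh
  push Not at hh
  have hJ := h.J_pos hα hβ
  have k1 := h.kpos 1 (by simp)
  have := h.down (a := t) (c := 1) (p := 0) (s := 0) ht.1 ht.2 le_rfl hh (by
    intro y hy
    have : 0 < J / k y := div_pos hJ (h.kpos y ⟨ht.1.trans hy.1, hy.2⟩)
    simpa using this)
  have h1 := h.h1
  have : k 1 * (β * ρ 1) ≤ 0 :=
    mul_nonpos_of_nonneg_of_nonpos k1.le (mul_nonpos_of_nonneg_of_nonpos hβ.le (by linarith))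
  linarith

lemma IsStatSol.toSol {k : ℝ → ℝ} {ε α β : ℝ} {ρ : ℝ → ℝ} (hk : ContDiff ℝ 2 k)
    (hkpos : ∀ x ∈ Icc (0:ℝ) 1, 0 < k x) (hε : 0 < ε) (h : IsStatSol k ε α β ρ) :
    ∃ J, Sol k ε α β J ρ := by
  obtain ⟨hC, hD, h0, h1⟩ := h
  have hu : UniqueDiffOn ℝ (Icc (0:ℝ) 1) := uniqueDiffOn_Icc zero_lt_one
  have d1 : DifferentiableOn ℝ ρ (Icc 0 1) := hC.differentiableOn (by norm_num)
  have d2 : DifferentiableOn ℝ (derivWithin ρ (Icc 0 1)) (Icc 0 1) :=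
    (hC.derivWithin hu (m := 1) (by norm_num)).differentiableOn (by norm_num)
  have dk : DifferentiableOn ℝ k (Icc 0 1) := (hk.differentiable (by norm_num)).differentiableOn
  have dg : DifferentiableOn ℝ (fun y => k y * flux ε ρ y) (Icc 0 1) := by
    unfold flux
    fun_prop
  have hc := constant_of_derivWithin_zero dg (fun x hx => hD x ⟨hx.1, hx.2.le⟩)
  refine ⟨k 0 * flux ε ρ 0, hε, hkpos, ?_, by rw [h0], ?_⟩
  · intro t ht
    have := (d1 t ht).hasDerivWithinAt
    have e := hc t ht
    have kt := hkpos t ht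
    have : (ρ t * (1 - ρ t) - (k 0 * flux ε ρ 0) / k t) / ε = derivWithin ρ (Icc 0 1) t := by
      rw [← e, mul_div_cancel_left₀ _ kt.ne']
      unfold flux
      field_simp
      ring
    rw [this]
    assumption
  · rw [← h1]
    exact (hc 1 (by simp)).symm

lemma right_nbhd {g : ℝ → ℝ} {x : ℝ} (hx : x < 1) (hg : ContinuousAt g x) (hp : 0 < g x) :
    ∃ r > 0, ∃ m > 0, x + r < 1 ∧ ∀ y ∈ Icc x (x + r), m < g y := by
  have := hg.eventually (lt_mem_nhds (half_lt_self hp))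
  obtain ⟨e, he, hh⟩ := Metric.eventually_nhds_iff.1 this
  refine ⟨min (e/2) ((1 - x)/2), lt_min (by linarith) (by linarith), g x / 2, by linarith, ?_, ?_⟩
  · have := min_le_right (e/2) ((1 - x)/2)
    linarith
  · intro y hy
    apply hh
    have := min_le_left (e/2) ((1 - x)/2)
    rw [Real.dist_eq, abs_lt]
    constructor <;> linarith [hy.1, hy.2]

lemma left_nbhd {g : ℝ → ℝ} {x : ℝ} (hx : x < 1) (hg : ContinuousAt g 1) (hp : 0 < g 1) :
    ∃ r > 0, ∃ m > 0, x < 1 - r ∧ ∀ y ∈ Icc (1 - r) 1, m < g y := by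
  have := hg.eventually (lt_mem_nhds (half_lt_self hp))
  obtain ⟨e, he, hh⟩ := Metric.eventually_nhds_iff.1 this
  refine ⟨min (e/2) ((1 - x)/2), lt_min (by linarith) (by linarith), g 1 / 2, by linarith, ?_, ?_⟩
  · have := min_le_right (e/2) ((1 - x)/2)
    linarith
  · intro y hy
    apply hh
    have := min_le_left (e/2) ((1 - x)/2)
    rw [Real.dist_eq, abs_lt]
    constructor <;> linarith [hy.1, hy.2]

/-- A solution cannot be on the upper half at a time `t < 1`. -/
lemma lemE {k : ℝ → ℝ} {α β K b km t : ℝ} (hk : Continuous k)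
    (hkpos : ∀ x ∈ Icc (0:ℝ) 1, 0 < k x) (hkm : ∀ x ∈ Icc (0:ℝ) 1, km ≤ k x)
    (hKm : 4 * K < km) (hb : b < 1/2) (hbβ : b < β) (hbK : K < b * (1 - b) * k 1) (hb0 : 0 < b)
    (ht0 : 0 ≤ t) (ht : t < 1) :
    ∃ ε₁ > 0, ∀ ε < ε₁, ∀ J ρ, Sol k ε α β J ρ → J ≤ K → ρ t < 1/2 := by
  have k1 := hkpos 1 (by simp)
  obtain ⟨r, hr, m, hm, hxr, hy⟩ := left_nbhd (g := fun y => b * (1 - b) - K / k y) ht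
    (by have := k1.ne'
        have := hk.continuousAt (x := 1)
        fun_prop (disch := assumption))
    (by simp only [sub_pos]; rwa [div_lt_iff₀ k1])
  refine ⟨m * r / (1/2 - b), by have : 0 < 1/2 - b := by linarith
                                positivity, ?_⟩
  intro ε hε J ρ h hJ
  by_contra hh
  push Not at hh
  rw [lt_div_iff₀ (by linarith)] at hε
  have s1 : 1/2 ≤ ρ (1 - r) := by
    have := h.up (a := t) (c := 1 - r) (p := 1/2) (s := 0) ht0 hxr.le (by linarith) hh (by
      intro y hy
      have ym : y ∈ Icc (0:ℝ) 1 := ⟨ht0.trans hy.1, by linarith [hy.2]⟩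
      have : J / k y < 1/4 := by
        rw [div_lt_iff₀ (hkpos y ym)]
        linarith [hkm y ym]
      norm_num
      linarith)
    linarith
  have s2 := h.up (a := 1 - r) (c := 1) (p := 1/2) (s := (1/2 - b) / r) (by linarith) (by linarith)
    le_rfl s1 (by
      intro y hyy
      have ym : y ∈ Icc (0:ℝ) 1 := ⟨by linarith [hyy.1], hyy.2⟩
      have h1 := hy y hyy
      have h2 : J / k y ≤ K / k y := div_le_div_of_nonneg_right hJ (hkpos y ym).le
      have h3 : ε * ((1/2 - b) / r) < m := by
        rw [← mul_div_assoc, div_lt_iff₀ hr]; exact hε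
      have h4 : 0 ≤ (1/2 - b) / r * (y - (1 - r)) :=
        mul_nonneg (div_nonneg (by linarith) hr.le) (by linarith [hyy.1])
      have h5 : (1/2 - b) / r * (y - (1 - r)) ≤ 1/2 - b := by
        rw [div_mul_eq_mul_div, div_le_iff₀ hr]
        exact mul_le_mul_of_nonneg_left (by linarith [hyy.2]) (by linarith)
      have h6 : b * (1 - b) ≤ (1/2 + (1/2 - b) / r * (y - (1 - r))) *
          (1 - (1/2 + (1/2 - b) / r * (y - (1 - r)))) := by
        nlinarith
      linarith)
  have s3 : (1/2 - b) / r * (1 - (1 - r)) = 1/2 - b := by field_simp; ring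
  have s4 : 1 - b ≤ ρ 1 := by linarith
  have h1 := h.h1
  have h2 : b * (1 - b) < β * ρ 1 := by
    nlinarith
  nlinarith

lemma lemU {k : ℝ → ℝ} {α β K b km x u : ℝ} (hk : Continuous k)
    (hkpos : ∀ x ∈ Icc (0:ℝ) 1, 0 < k x) (hkm : ∀ x ∈ Icc (0:ℝ) 1, km ≤ k x)
    (hKm : 4 * K < km) (hb : b < 1/2) (hbβ : b < β) (hbK : K < b * (1 - b) * k 1) (hb0 : 0 < b)
    (hx0 : 0 ≤ x) (hx : x < 1) (hu : u < 1/2) (huK : K < u * (1 - u) * k x) :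
    ∃ ε₁ > 0, ∀ ε < ε₁, ∀ J ρ, Sol k ε α β J ρ → J ≤ K → ρ x < u := by
  have kx := hkpos x ⟨hx0, hx.le⟩
  obtain ⟨r, hr, m, hm, hxr, hy⟩ := right_nbhd (g := fun y => u * (1 - u) - K / k y) hx
    (by have := kx.ne'
        have := hk.continuousAt (x := x)
        fun_prop (disch := assumption))
    (by simp only [sub_pos]; rwa [div_lt_iff₀ kx])
  obtain ⟨e, he, hE⟩ := lemE (α := α) (t := x + r) hk hkpos hkm hKm hb hbβ hbK hb0
    (by linarith) hxr
  refine ⟨min e (m * r / (1/2 - u)), lt_min he (by have : 0 < 1/2 - u := by linarith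
                                                   positivity), ?_⟩
  intro ε hε J ρ h hJ
  by_contra hh
  push Not at hh
  have hε2 := hε.trans_le (min_le_right _ _)
  rw [lt_div_iff₀ (by linarith)] at hε2
  have s0 := hE ε (hε.trans_le (min_le_left _ _)) J ρ h hJ
  have s2 := h.up (a := x) (c := x + r) (p := u) (s := (1/2 - u) / r) hx0 (by linarith)
    hxr.le hh (by
      intro y hyy
      have ym : y ∈ Icc (0:ℝ) 1 := ⟨by linarith [hyy.1], by linarith [hyy.2]⟩
      have h1 := hy y hyy
      have h2 : J / k y ≤ K / k y := div_le_div_of_nonneg_right hJ (hkpos y ym).le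
      have h3 : ε * ((1/2 - u) / r) < m := by
        rw [← mul_div_assoc, div_lt_iff₀ hr]; exact hε2
      have h4 : 0 ≤ (1/2 - u) / r * (y - x) :=
        mul_nonneg (div_nonneg (by linarith) hr.le) (by linarith [hyy.1])
      have h5 : (1/2 - u) / r * (y - x) ≤ 1/2 - u := by
        rw [div_mul_eq_mul_div, div_le_iff₀ hr]
        exact mul_le_mul_of_nonneg_left (by linarith [hyy.2]) (by linarith)
      have h6 : u * (1 - u) ≤ (u + (1/2 - u) / r * (y - x)) *
          (1 - (u + (1/2 - u) / r * (y - x))) := by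
        nlinarith
      linarith)
  have s3 : (1/2 - u) / r * (x + r - x) = 1/2 - u := by field_simp; ring
  linarith

lemma lemD {k : ℝ → ℝ} {α β K x u : ℝ} (hk : Continuous k)
    (hkpos : ∀ x ∈ Icc (0:ℝ) 1, 0 < k x) (hα : 0 < α) (hβ : 0 < β)
    (hx0 : 0 ≤ x) (hx : x < 1) (hu : u < 1/2) (huK : u * (1 - u) * k x < K) :
    ∃ ε₁ > 0, ∀ ε < ε₁, ∀ J ρ, Sol k ε α β J ρ → K ≤ J → u < ρ x := by
  have kx := hkpos x ⟨hx0, hx.le⟩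
  obtain hu0 | hu0 := le_or_gt u 0
  · exact ⟨1, one_pos, fun ε _ J ρ h _ => hu0.trans_lt (h.pos hα hβ ⟨hx0, hx.le⟩)⟩
  obtain ⟨r, hr, m, hm, hxr, hy⟩ := right_nbhd (g := fun y => K / k y - u * (1 - u)) hx
    (by have := kx.ne'
        have := hk.continuousAt (x := x)
        fun_prop (disch := assumption))
    (by simp only [sub_pos]; rwa [lt_div_iff₀ kx])
  refine ⟨m * r / u, by positivity, ?_⟩
  intro ε hε J ρ h hJ
  by_contra hh
  push Not at hh
  rw [lt_div_iff₀ hu0] at hε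
  have s0 := h.pos hα hβ (t := x + r) ⟨by linarith, hxr.le⟩
  have s2 := h.down (a := x) (c := x + r) (p := u) (s := -(u / r)) hx0 (by linarith)
    hxr.le hh (by
      intro y hyy
      have ym : y ∈ Icc (0:ℝ) 1 := ⟨by linarith [hyy.1], by linarith [hyy.2]⟩
      have h1 := hy y hyy
      have h2 : K / k y ≤ J / k y := div_le_div_of_nonneg_right hJ (hkpos y ym).le
      have h3 : ε * (u / r) < m := by
        rw [← mul_div_assoc, div_lt_iff₀ hr]; exact hε
      have h4 : 0 ≤ u / r * (y - x) :=
        mul_nonneg (div_nonneg (by linarith) hr.le) (by linarith [hyy.1])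
      have h6 : (u + -(u / r) * (y - x)) * (1 - (u + -(u / r) * (y - x))) ≤ u * (1 - u) := by
        nlinarith
      linarith)
  have s3 : u / r * (x + r - x) = u := by field_simp; ring
  linarith

lemma root_facts {q : ℝ} (hq : q < 1/4) (hq0 : 0 < q) :
    0 < 1/2 * (1 - Real.sqrt (1 - 4 * q)) ∧ 1/2 * (1 - Real.sqrt (1 - 4 * q)) < 1/2 ∧
    1/2 * (1 - Real.sqrt (1 - 4 * q)) * (1 - 1/2 * (1 - Real.sqrt (1 - 4 * q))) = q := by
  have h1 := Real.sq_sqrt (show 0 ≤ 1 - 4 * q by linarith)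
  have h2 := Real.sqrt_pos.2 (show 0 < 1 - 4 * q by linarith)
  refine ⟨?_, by linarith, by nlinarith⟩
  nlinarith

/-- In the low-density regions `G_1 ∪ G_2`
(`0 < α < ρ_c^0`, `ρ*(α) < β < 1`, `β ≠ 1 - ρ*(α)`), as `ε → 0` the solutions of the
stationary boundary value problem converge to the low-density reduced orbit starting at
`ρ = α`: `ρ(0) → α`, `ρ(x) → (1/2)(1 - √(1 - 4α(1-α)k(0)/k(x)))` at interior points `x`,
and `ρ(1) → α(1-α)k(0)/(βk(1))` (boundary layer only at the exit). -/
theorem bvp_low_density_profile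
    (k : ℝ → ℝ) (ξs : ℝ)
    (hk : ContDiff ℝ 2 k)
    (hkpos : ∀ x ∈ Icc (0:ℝ) 1, 0 < k x)
    (hξs : ξs ∈ Ioo (0:ℝ) 1)
    (hmin : ∀ x ∈ Icc (0:ℝ) 1, x ≠ ξs → k ξs < k x)
    (hk's : deriv k ξs = 0)
    (hk''s : 0 < deriv (deriv k) ξs)
    (α β : ℝ)
    (hα0 : 0 < α) (hα : α < rhoC0 k ξs)
    (hβ1 : rhoStar k α < β) (hβ2 : β < 1) (hβ3 : β ≠ 1 - rhoStar k α) :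
    ∀ δ > 0, ∀ x ∈ Ioo (0:ℝ) 1, ∃ ε₀ > 0, ∀ ε : ℝ, 0 < ε → ε < ε₀ →
      ∀ ρ : ℝ → ℝ, IsStatSol k ε α β ρ →
        |ρ 0 - α| < δ ∧
        |ρ x - 1/2 * (1 - Real.sqrt (1 - 4*α*(1-α) * k 0 / k x))| < δ ∧
        |ρ 1 - α*(1-α) * k 0 / (β * k 1)| < δ := by
  have k0 := hkpos 0 (by simp)
  have k1 := hkpos 1 (by simp)
  have km := hkpos ξs ⟨hξs.1.le, hξs.2.le⟩
  have hkm : ∀ x ∈ Icc (0:ℝ) 1, k ξs ≤ k x := fun x hx => by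
    by_cases h : x = ξs
    · rw [h]
    · exact (hmin x hx h).le
  have hkc : Continuous k := hk.continuous
  have hα2 : α < 1/2 ∧ 4 * (α * (1 - α) * k 0) < k ξs := by
    unfold rhoC0 at hα
    have hlt : k ξs < k 0 := hmin 0 (by simp) hξs.1.ne
    have hq : k ξs / k 0 < 1 := (div_lt_one k0).2 hlt
    have h1 := Real.sq_sqrt (show 0 ≤ 1 - k ξs / k 0 by linarith)
    have h2 := Real.sqrt_nonneg (1 - k ξs / k 0)
    have h3 : 4 * (α * (1 - α)) < k ξs / k 0 := by nlinarith
    rw [lt_div_iff₀ k0] at h3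
    exact ⟨by linarith, by linarith⟩
  obtain ⟨hαh, hJm⟩ := hα2
  set Js : ℝ := α * (1 - α) * k 0 with hJs
  have hJs0 : 0 < Js := by
    have : 0 < 1 - α := by linarith
    positivity
  have hroot : ∀ y ∈ Icc (0:ℝ) 1, 0 < 1/2 * (1 - Real.sqrt (1 - 4*α*(1-α) * k 0 / k y)) ∧
      1/2 * (1 - Real.sqrt (1 - 4*α*(1-α) * k 0 / k y)) < 1/2 ∧
      1/2 * (1 - Real.sqrt (1 - 4*α*(1-α) * k 0 / k y)) *
        (1 - 1/2 * (1 - Real.sqrt (1 - 4*α*(1-α) * k 0 / k y))) * k y = Js := by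
    intro y hy
    have ky := hkpos y hy
    have e : 4*α*(1-α) * k 0 / k y = 4 * (Js / k y) := by rw [hJs]; ring
    rw [e]
    obtain ⟨h1, h2, h3⟩ := root_facts (q := Js / k y)
      (by rw [div_lt_iff₀ ky]; linarith [hkm y hy]) (by positivity)
    refine ⟨h1, h2, ?_⟩
    rw [h3]
    field_simp
  obtain ⟨hb0, hbh, hbe⟩ := hroot 1 (by simp)
  change 0 < rhoStar k α at hb0
  change rhoStar k α < 1/2 at hbh
  change rhoStar k α * (1 - rhoStar k α) * k 1 = Js at hbe
  have hβ0 : 0 < β := hb0.trans hβ1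
  obtain ⟨b, hb1, hb2⟩ := exists_between (lt_min hβ1 hbh)
  obtain ⟨hbβ, hbh2⟩ := lt_min_iff.1 hb2
  have hbJ : Js < b * (1 - b) * k 1 := by
    rw [← hbe]
    apply mul_lt_mul_of_pos_right _ k1
    nlinarith
  obtain ⟨Ks, hK1, hK2⟩ := exists_between (lt_min hbJ (show Js < k ξs / 4 by linarith))
  obtain ⟨hKb, hKm⟩ := lt_min_iff.1 hK2
  have hconv : ∀ η > 0, ∃ ε₁ > 0, ∀ ε < ε₁, ∀ J ρ, Sol k ε α β J ρ → |ρ 0 - α| < η := by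
    intro η hη
    have hp : 0 < k 0 * α * η := by positivity
    obtain ⟨e1, he1, H1⟩ := lemD (α := α) (β := β) (K := Js + k 0 * α * η) (x := 0) (u := α)
      hkc hkpos hα0 hβ0 le_rfl one_pos hαh (by linarith)
    obtain ⟨e2, he2, H2⟩ := lemU (α := α) (β := β) (K := Js - k 0 * α * η) (x := 0) (u := α)
      hkc hkpos hkm (by linarith) hbh2 hbβ (by linarith) (hb0.trans hb1) le_rfl one_pos hαh (by linarith)
    refine ⟨min e1 e2, lt_min he1 he2, fun ε hε J ρ h => ?_⟩
    have H1 := H1 ε (hε.trans_le (min_le_left _ _)) J ρ h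
    have H2 := H2 ε (hε.trans_le (min_le_right _ _)) J ρ h
    have e : J = Js - k 0 * α * (ρ 0 - α) := by rw [h.h0, hJs]; ring
    rw [abs_lt]
    constructor
    · by_contra hh
      push Not at hh
      have : k 0 * α * (ρ 0 - α) ≤ k 0 * α * (-η) :=
        mul_le_mul_of_nonneg_left hh (by positivity)
      have := H1 (by linarith)
      linarith
    · by_contra hh
      push Not at hh
      have : k 0 * α * η ≤ k 0 * α * (ρ 0 - α) :=
        mul_le_mul_of_nonneg_left hh (by positivity)
      have := H2 (by linarith)
      linarith
  intro δ hδ x hx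
  have hxI : x ∈ Icc (0:ℝ) 1 := ⟨hx.1.le, hx.2.le⟩
  have kx := hkpos x hxI
  obtain ⟨hP0, hPh, hPe⟩ := hroot x hxI
  set P : ℝ := 1/2 * (1 - Real.sqrt (1 - 4*α*(1-α) * k 0 / k x)) with hP
  -- upper level
  obtain ⟨u, hu1, hu2⟩ := exists_between (lt_min hPh (show P < P + δ by linarith))
  obtain ⟨huh, huδ⟩ := lt_min_iff.1 hu2
  have huJ : Js < u * (1 - u) * k x := by
    rw [← hPe]
    apply mul_lt_mul_of_pos_right _ kx
    nlinarith
  obtain ⟨K1, hK11, hK12⟩ := exists_between (lt_min huJ hK1)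
  obtain ⟨hK13, hK14⟩ := lt_min_iff.1 hK12
  have hvJ : (P - δ) * (1 - (P - δ)) * k x < Js := by
    rw [← hPe]
    apply mul_lt_mul_of_pos_right _ kx
    nlinarith
  obtain ⟨K2, hK21, hK22⟩ := exists_between hvJ
  obtain ⟨e1, he1, H1⟩ := lemD (α := α) (β := β) (K := K2) (x := x) (u := P - δ)
      hkc hkpos hα0 hβ0 hx.1.le hx.2 (by linarith) hK21
  obtain ⟨e2, he2, H2⟩ := lemU (α := α) (β := β) (K := K1) (x := x) (u := u)
      hkc hkpos hkm (by linarith) hbh2 hbβ (by linarith) (hb0.trans hb1) hx.1.le hx.2 huh hK13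
  have hp : 0 < k 0 * α := by positivity
  have hq : 0 < β * k 1 := by positivity
  obtain ⟨η, hη0, hη⟩ := exists_between (lt_min (lt_min hδ (show 0 < δ * (β * k 1) / (k 0 * α) by positivity))
    (lt_min (show 0 < (K1 - Js) / (k 0 * α) from div_pos (by linarith) hp)
      (show 0 < (Js - K2) / (k 0 * α) from div_pos (by linarith) hp)))
  simp only [lt_min_iff, lt_div_iff₀ hp] at hη
  obtain ⟨⟨hη1, hη2⟩, hη3, hη4⟩ := hη
  obtain ⟨e3, he3, H3⟩ := hconv η hη0
  refine ⟨min e1 (min e2 e3), lt_min he1 (lt_min he2 he3), fun ε hε0 hε ρ hs => ?_⟩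
  simp only [lt_min_iff] at hε
  obtain ⟨J, h⟩ := hs.toSol hk hkpos hε0
  have H3 := H3 ε hε.2.2 J ρ h
  have e : J = Js - (ρ 0 - α) * (k 0 * α) := by rw [h.h0, hJs]; ring
  have H4 : |(ρ 0 - α) * (k 0 * α)| < η * (k 0 * α) := by
    rw [abs_mul, abs_of_pos hp]
    exact mul_lt_mul_of_pos_right H3 hp
  have H5 := abs_lt.1 H4
  have H1 := H1 ε hε.1 J ρ h (by linarith)
  have H2 := H2 ε hε.2.1 J ρ h (by linarith)
  refine ⟨H3.trans hη1, abs_lt.2 ⟨by linarith, by linarith⟩, ?_⟩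
  have e2 : ρ 1 - Js / (β * k 1) = -((ρ 0 - α) * (k 0 * α)) / (β * k 1) := by
    rw [eq_div_iff hq.ne', sub_mul, div_mul_cancel₀ _ hq.ne']
    linarith [h.h1]
  rw [e2, abs_div, abs_neg, abs_of_pos hq, div_lt_iff₀ hq]
  linarith
end

section
/- Let 0 < β < 1 − ρ_c^1 and 1 − ρ_*(β) < α < 1 with α ≠ ρ_*(β), where ρ_*(β) := (1/2)(1 + √(1 − 4β(1−β)k(1)/k(0))) (the high-density parameter regions G_7 and G_8). Then for every δ > 0 and every x ∈ (0,1) there exists ε_0 > 0 such that for every ε ∈ (0, ε_0) and every twice continuously differentiable ρ : [0,1] → ℝ solving the stationary boundary value problem one has |ρ(1) − (1 − β)| < δ, |ρ(x) − (1/2)(1 + √(1 − 4β(1−β)k(1)/k(x)))| < δ, and |ρ(0) − (1 − β(1−β)k(1)/(α k(0)))| < δ; i.e., as ε → 0 the solution converges to the high-density reduced orbit ending at ρ = 1 − β, with a boundary layer only at the entrance x = 0. -/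
open Set

open Set Filter Topology

/-- Normal form of the stationary problem with constant `J = k j`. -/
def RicSol (k : ℝ → ℝ) (ε J : ℝ) (ρ : ℝ → ℝ) : Prop :=
  ∀ y ∈ Icc (0:ℝ) 1, HasDerivWithinAt ρ ((ρ y * (1 - ρ y) - J / k y) / ε) (Icc (0:ℝ) 1) y

lemma ric_right {k : ℝ → ℝ} {ε J : ℝ} {ρ : ℝ → ℝ} (h : RicSol k ε J ρ) {a b : ℝ}
    (ha : 0 ≤ a) (hb : b ≤ 1) : ContinuousOn ρ (Icc a b) ∧
    ∀ y ∈ Ico a b, HasDerivWithinAt ρ ((ρ y * (1 - ρ y) - J / k y) / ε) (Ici y) y := by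
  constructor
  · intro y hy
    exact ((h y ⟨ha.trans hy.1, hy.2.trans hb⟩).continuousWithinAt).mono (Icc_subset_Icc ha hb)
  · intro y hy
    refine (h y ⟨ha.trans hy.1, hy.2.le.trans hb⟩).mono_of_mem_nhdsWithin ?_
    exact Icc_mem_nhdsGE_of_mem ⟨ha.trans hy.1, hy.2.trans_le hb⟩

lemma cmp_up {k : ℝ → ℝ} {ε J : ℝ} {ρ : ℝ → ℝ} (hε : 0 < ε) (h : RicSol k ε J ρ) {a b : ℝ}
    (ha : 0 ≤ a) (hb : b ≤ 1) (hab : a ≤ b) (w w' : ℝ → ℝ)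
    (hw : ∀ y ∈ Icc a b, HasDerivAt w (w' y) y) (h0 : ρ a ≤ w a)
    (hlt : ∀ y ∈ Icc a b, w y * (1 - w y) - J / k y < ε * w' y) : ρ b ≤ w b := by
  obtain ⟨hc, hd⟩ := ric_right h ha hb
  refine image_le_of_deriv_right_lt_deriv_boundary' hc hd h0
    (fun y hy => (hw y hy).continuousAt.continuousWithinAt)
    (fun y hy => (hw y (Ico_subset_Icc_self hy)).hasDerivWithinAt) ?_ (right_mem_Icc.2 hab)
  intro y hy e
  rw [div_lt_iff₀ hε, e, mul_comm (w' y)]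
  exact hlt y (Ico_subset_Icc_self hy)

lemma cmp_low {k : ℝ → ℝ} {ε J : ℝ} {ρ : ℝ → ℝ} (hε : 0 < ε) (h : RicSol k ε J ρ) {a b : ℝ}
    (ha : 0 ≤ a) (hb : b ≤ 1) (hab : a ≤ b) (w w' : ℝ → ℝ)
    (hw : ∀ y ∈ Icc a b, HasDerivAt w (w' y) y) (h0 : w a ≤ ρ a)
    (hlt : ∀ y ∈ Icc a b, ε * w' y < w y * (1 - w y) - J / k y) : w b ≤ ρ b := by
  obtain ⟨hc, hd⟩ := ric_right h ha hb
  refine image_le_of_deriv_right_lt_deriv_boundary'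
    (fun y hy => (hw y hy).continuousAt.continuousWithinAt)
    (fun y hy => (hw y (Ico_subset_Icc_self hy)).hasDerivWithinAt) h0 hc hd ?_
    (right_mem_Icc.2 hab)
  intro y hy e
  rw [lt_div_iff₀ hε, ← e, mul_comm (w' y)]
  exact hlt y (Ico_subset_Icc_self hy)

lemma sol_facts {k : ℝ → ℝ} (hk : ContDiff ℝ 2 k) (hkpos : ∀ x ∈ Icc (0:ℝ) 1, 0 < k x)
    {α β ε : ℝ} (hα : 0 < α) (hβ : 0 < β) (hε : 0 < ε) {ρ : ℝ → ℝ} (h : IsStatSol k ε α β ρ) :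
    ∃ J, 0 < J ∧ RicSol k ε J ρ ∧ J = k 0 * (α * (1 - ρ 0)) ∧ J = k 1 * (β * ρ 1) ∧
      ∀ y ∈ Icc (0:ℝ) 1, ρ y ≤ 1 := by
  obtain ⟨h1, h2, h3, h4⟩ := h
  have m0 : (0:ℝ) ∈ Icc (0:ℝ) 1 := by simp
  have m1 : (1:ℝ) ∈ Icc (0:ℝ) 1 := by simp
  have k0 := hkpos 0 m0
  have k1 := hkpos 1 m1
  have hu : UniqueDiffOn ℝ (Icc (0:ℝ) 1) := uniqueDiffOn_Icc one_pos
  have hρd : DifferentiableOn ℝ ρ (Icc (0:ℝ) 1) := h1.differentiableOn (by norm_num)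
  have hd' : DifferentiableOn ℝ (derivWithin ρ (Icc (0:ℝ) 1)) (Icc (0:ℝ) 1) :=
    (ContDiffOn.derivWithin (m := 1) h1 hu (by norm_num)).differentiableOn (by norm_num)
  have hkd : Differentiable ℝ k := hk.differentiable (by norm_num)
  have hdiff : DifferentiableOn ℝ (fun y => k y * flux ε ρ y) (Icc (0:ℝ) 1) := by
    unfold flux
    exact hkd.differentiableOn.mul (((hd'.const_mul (-ε))).add
      (hρd.mul ((differentiableOn_const 1).sub hρd)))
  have hconst : ∀ y ∈ Icc (0:ℝ) 1, k y * flux ε ρ y = k 0 * flux ε ρ 0 :=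
    constant_of_derivWithin_zero hdiff (fun y hy => h2 y (Ico_subset_Icc_self hy))
  have e0 : k 0 * flux ε ρ 0 = k 0 * (α * (1 - ρ 0)) := by rw [h3]
  have e1 : k 0 * flux ε ρ 0 = k 1 * (β * ρ 1) := by rw [← hconst 1 m1, h4]
  set J := k 0 * flux ε ρ 0 with hJ
  have hric : RicSol k ε J ρ := by
    intro y hy
    have := (hρd y hy).hasDerivWithinAt
    refine this.congr_deriv ?_
    have hky := hkpos y hy
    rw [← hconst y hy]
    unfold flux
    field_simp
    ring
  have hJpos : 0 < J := by
    by_contra hn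
    push Not at hn
    have r0 : 1 ≤ ρ 0 := by
      by_contra hc
      push Not at hc
      have : 0 < k 0 * (α * (1 - ρ 0)) := mul_pos k0 (mul_pos hα (by linarith))
      linarith
    have r1 : ρ 1 ≤ 0 := by
      by_contra hc
      push Not at hc
      have : 0 < k 1 * (β * ρ 1) := by positivity
      linarith
    have := cmp_low hε hric le_rfl le_rfl zero_le_one (fun _ => 1/2) (fun _ => 0)
      (fun y _ => hasDerivAt_const y _) (by linarith) (by
        intro y hy
        have : J / k y ≤ 0 := div_nonpos_of_nonpos_of_nonneg hn (hkpos y hy).le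
        linarith)
    linarith
  refine ⟨J, hJpos, hric, e0, e1, ?_⟩
  intro y hy
  refine cmp_up hε hric le_rfl hy.2 hy.1 (fun _ => 1) (fun _ => 0)
      (fun y _ => hasDerivAt_const y _) ?_ ?_
  · by_contra hc
    push Not at hc
    have : k 0 * (α * (1 - ρ 0)) < 0 :=
      mul_neg_of_pos_of_neg k0 (mul_neg_of_pos_of_neg hα (by linarith))
    linarith
  · intro z hz
    have : 0 < J / k z := div_pos hJpos (hkpos z ⟨hz.1, hz.2.trans hy.2⟩)
    linarith

lemma small_eps {a b : ℝ} (w' g : ℝ → ℝ) (hw : ContinuousOn w' (Icc a b))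
    (hg : ContinuousOn g (Icc a b)) (hpos : ∀ y ∈ Icc a b, 0 < g y) :
    ∀ᶠ ε in 𝓝[>] (0:ℝ), ∀ y ∈ Icc a b, ε * |w' y| < g y := by
  have hc : ContinuousOn (fun y => |w' y| / g y) (Icc a b) :=
    hw.abs.div hg (fun y hy => (hpos y hy).ne')
  obtain ⟨C, hC⟩ := isCompact_Icc.exists_bound_of_continuousOn hc
  have hD : 0 < |C| + 1 := by positivity
  have : Ioo (0:ℝ) (1 / (|C| + 1)) ∈ 𝓝[>] (0:ℝ) := Ioo_mem_nhdsGT (by positivity)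
  filter_upwards [this] with ε hε y hy
  have h1 := (Real.norm_eq_abs _ ▸ hC y hy)
  have h2 : |w' y| / g y < |C| + 1 := by
    have := le_abs_self (|w' y| / g y)
    have := le_abs_self C
    linarith
  have hgy := hpos y hy
  rw [div_lt_iff₀ hgy] at h2
  have h3 := hε.2
  rw [lt_div_iff₀ hD] at h3
  calc ε * |w' y| ≤ ε * ((|C| + 1) * g y) := by
        exact mul_le_mul_of_nonneg_left h2.le hε.1.le
    _ = (ε * (|C| + 1)) * g y := by ring
    _ < 1 * g y := by exact mul_lt_mul_of_pos_right h3 hgy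
    _ = g y := one_mul _

/-- barrier -/
noncomputable def bar (k : ℝ → ℝ) (J s0 s1 X y : ℝ) : ℝ :=
  1/2 + (s0 + (s1 - s0) * (y / X)) * Real.sqrt (1 - 4 * J / k y)

noncomputable def bar' (k : ℝ → ℝ) (J s0 s1 X y : ℝ) : ℝ :=
  ((s1 - s0) / X) * Real.sqrt (1 - 4 * J / k y) + (s0 + (s1 - s0) * (y / X)) *
    ((4 * J * deriv k y / (k y)^2) / (2 * Real.sqrt (1 - 4 * J / k y)))

lemma disc_pos {k : ℝ → ℝ} {J y : ℝ} (hy : 0 < k y) (hJ : 4 * J < k y) :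
    0 < 1 - 4 * J / k y := by
  have : 4 * J / k y < 1 := by rw [div_lt_one hy]; exact hJ
  linarith

lemma bar_deriv {k : ℝ → ℝ} (hk : ContDiff ℝ 2 k) {J s0 s1 X y : ℝ} (hy : 0 < k y)
    (hJ : 4 * J < k y) : HasDerivAt (bar k J s0 s1 X) (bar' k J s0 s1 X y) y := by
  have hkd : HasDerivAt k (deriv k y) y := (hk.differentiable (by norm_num) y).hasDerivAt
  have h1 : HasDerivAt (fun y => 1 - 4 * J / k y) (4 * J * deriv k y / (k y)^2) y := by
    have := ((hasDerivAt_const y (4*J)).div hkd hy.ne').const_sub 1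
    refine this.congr_deriv ?_
    ring
  have h2 := h1.sqrt (disc_pos hy hJ).ne'
  have h3 : HasDerivAt (fun y => s0 + (s1 - s0) * (y / X)) ((s1 - s0) / X) y := by
    have := (((hasDerivAt_id y).div_const X).const_mul (s1 - s0)).const_add s0
    refine this.congr_deriv ?_
    ring
  exact (h3.mul h2).const_add (1/2)

lemma bar_cont {k : ℝ → ℝ} (hk : ContDiff ℝ 2 k) {J s0 s1 X : ℝ} {S : Set ℝ}
    (hy : ∀ y ∈ S, 0 < k y) (hJ : ∀ y ∈ S, 4 * J < k y) :
    ContinuousOn (bar' k J s0 s1 X) S ∧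
    ContinuousOn (fun y => 1 - 4 * J / k y) S := by
  have c1 : ContinuousOn k S := hk.continuous.continuousOn
  have c2 : ContinuousOn (deriv k) S := (hk.continuous_deriv (by norm_num)).continuousOn
  have c3 : ContinuousOn (fun y => 1 - 4 * J / k y) S :=
    continuousOn_const.sub (continuousOn_const.div c1 (fun y h => (hy y h).ne'))
  refine ⟨?_, c3⟩
  have c4 : ContinuousOn (fun y => s0 + (s1 - s0) * (y / X)) S := by fun_prop
  refine (continuousOn_const.mul c3.sqrt).add (c4.mul ?_)
  refine ((continuousOn_const.mul c2).div (c1.pow 2) ?_).div (continuousOn_const.mul c3.sqrt) ?_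
  · intro y h; exact pow_ne_zero _ (hy y h).ne'
  · intro y h
    have := Real.sqrt_pos.2 (disc_pos (hy y h) (hJ y h))
    positivity

lemma bar_f {k : ℝ → ℝ} {J s0 s1 X y : ℝ} (hy : 0 < k y)
    (hJ : 4 * J < k y) : bar k J s0 s1 X y * (1 - bar k J s0 s1 X y) - J / k y =
      (1 - 4 * J / k y) * (1/4 - (s0 + (s1 - s0) * (y / X))^2) := by
  have h := Real.sq_sqrt (disc_pos hy hJ).le
  unfold bar
  set D := Real.sqrt (1 - 4 * J / k y)
  have : J / k y = (1 - D^2) / 4 := by rw [h]; ring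
  rw [← h, this]
  ring

lemma low_bd {k : ℝ → ℝ} (hk : ContDiff ℝ 2 k) (hkpos : ∀ x ∈ Icc (0:ℝ) 1, 0 < k x)
    {Jp : ℝ} (hJ : ∀ y ∈ Icc (0:ℝ) 1, 4 * Jp < k y) {X s0 s1 : ℝ} (hX : X ∈ Ioc (0:ℝ) 1)
    (h0 : s0 ∈ Ioo (-1/2:ℝ) (1/2)) (h1 : s1 ∈ Ioo (-1/2:ℝ) (1/2)) :
    ∀ᶠ ε in 𝓝[>] (0:ℝ), ∀ ρ J, J ≤ Jp → RicSol k ε J ρ →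
      1/2 + s0 * Real.sqrt (1 - 4 * Jp / k 0) ≤ ρ 0 →
      1/2 + s1 * Real.sqrt (1 - 4 * Jp / k X) ≤ ρ X := by
  have hsub : Icc (0:ℝ) X ⊆ Icc 0 1 := Icc_subset_Icc_right hX.2
  obtain ⟨c1, c2⟩ := bar_cont hk (s0 := s0) (s1 := s1) (X := X)
    (fun y hy => hkpos y (hsub hy)) (fun y hy => hJ y (hsub hy))
  have := small_eps _ (fun y => (1 - 4 * Jp / k y) * (1/4 - (s0 + (s1 - s0) * (y / X))^2)) c1
    (c2.mul (by fun_prop)) (by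
      intro y hy
      refine mul_pos (disc_pos (hkpos y (hsub hy)) (hJ y (hsub hy))) ?_
      have t0 : 0 ≤ y / X := div_nonneg hy.1 hX.1.le
      have t1 : y / X ≤ 1 := (div_le_one hX.1).2 hy.2
      set t := y / X
      have a1 : s0 + (s1 - s0) * t < 1/2 := by
        rcases lt_or_ge t (1/2) with h | h <;> nlinarith [h0.2, h1.2]
      have a2 : -1/2 < s0 + (s1 - s0) * t := by
        rcases lt_or_ge t (1/2) with h | h <;> nlinarith [h0.1, h1.1]
      nlinarith)
  filter_upwards [this, self_mem_nhdsWithin] with ε hε hε0 ρ J hJJ hric hini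
  have hε0 : 0 < ε := hε0
  have key := cmp_low hε0 hric le_rfl hX.2 hX.1.le (bar k Jp s0 s1 X) (bar' k Jp s0 s1 X)
    (fun y hy => bar_deriv hk (hkpos y (hsub hy)) (hJ y (hsub hy)))
    (by simpa [bar] using hini) (by
      intro y hy
      have h := hε y hy
      have e := bar_f (s0 := s0) (s1 := s1) (X := X) (hkpos y (hsub hy)) (hJ y (hsub hy))
      have l1 : ε * bar' k Jp s0 s1 X y ≤ ε * |bar' k Jp s0 s1 X y| :=
        mul_le_mul_of_nonneg_left (le_abs_self _) hε0.le
      have l2 : J / k y ≤ Jp / k y := div_le_div_of_nonneg_right hJJ (hkpos y (hsub hy)).le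
      linarith)
  simpa [bar, div_self hX.1.ne'] using key

lemma up_bd {k : ℝ → ℝ} (hk : ContDiff ℝ 2 k) (hkpos : ∀ x ∈ Icc (0:ℝ) 1, 0 < k x)
    {Jp : ℝ} (hJ : ∀ y ∈ Icc (0:ℝ) 1, 4 * Jp < k y) {X s0 s1 : ℝ} (hX : X ∈ Ioc (0:ℝ) 1)
    (h0 : 1/2 < s0) (h1 : 1/2 < s1) :
    ∀ᶠ ε in 𝓝[>] (0:ℝ), ∀ ρ J, Jp ≤ J → RicSol k ε J ρ →
      ρ 0 ≤ 1/2 + s0 * Real.sqrt (1 - 4 * Jp / k 0) →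
      ρ X ≤ 1/2 + s1 * Real.sqrt (1 - 4 * Jp / k X) := by
  have hsub : Icc (0:ℝ) X ⊆ Icc 0 1 := Icc_subset_Icc_right hX.2
  obtain ⟨c1, c2⟩ := bar_cont hk (s0 := s0) (s1 := s1) (X := X)
    (fun y hy => hkpos y (hsub hy)) (fun y hy => hJ y (hsub hy))
  have := small_eps _ (fun y => (1 - 4 * Jp / k y) * ((s0 + (s1 - s0) * (y / X))^2 - 1/4)) c1
    (c2.mul (by fun_prop)) (by
      intro y hy
      refine mul_pos (disc_pos (hkpos y (hsub hy)) (hJ y (hsub hy))) ?_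
      have t0 : 0 ≤ y / X := div_nonneg hy.1 hX.1.le
      have t1 : y / X ≤ 1 := (div_le_one hX.1).2 hy.2
      set t := y / X
      have a2 : 1/2 < s0 + (s1 - s0) * t := by
        rcases lt_or_ge t (1/2) with h | h <;> nlinarith
      nlinarith)
  filter_upwards [this, self_mem_nhdsWithin] with ε hε hε0 ρ J hJJ hric hini
  have hε0 : 0 < ε := hε0
  have key := cmp_up hε0 hric le_rfl hX.2 hX.1.le (bar k Jp s0 s1 X) (bar' k Jp s0 s1 X)
    (fun y hy => bar_deriv hk (hkpos y (hsub hy)) (hJ y (hsub hy)))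
    (by simpa [bar] using hini) (by
      intro y hy
      have h := hε y hy
      have e := bar_f (s0 := s0) (s1 := s1) (X := X) (hkpos y (hsub hy)) (hJ y (hsub hy))
      have l1 : ε * -bar' k Jp s0 s1 X y ≤ ε * |bar' k Jp s0 s1 X y| :=
        mul_le_mul_of_nonneg_left (neg_le_abs _) hε0.le
      have l2 : Jp / k y ≤ J / k y := div_le_div_of_nonneg_right hJJ (hkpos y (hsub hy)).le
      linarith)
  simpa [bar, div_self hX.1.ne'] using key

/-- Step 1: upper bound on the current. -/
lemma J_up {k : ℝ → ℝ} (hk : ContDiff ℝ 2 k) (hkpos : ∀ x ∈ Icc (0:ℝ) 1, 0 < k x)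
    {β : ℝ} (hβ0 : 0 < β) (hβ : β < 1/2) {η : ℝ} (hη : 0 < η) :
    ∀ᶠ ε in 𝓝[>] (0:ℝ), ∀ ρ J, RicSol k ε J ρ → J = k 1 * (β * ρ 1) →
      (∀ y ∈ Icc (0:ℝ) 1, ρ y ≤ 1) → J ≤ β * (1 - β) * k 1 + η := by
  have m1 : (1:ℝ) ∈ Icc (0:ℝ) 1 := by simp
  have k1 := hkpos 1 m1
  set Jp := β * (1 - β) * k 1 + η with hJp
  have hc : ContinuousAt (fun y => Jp / k y - β * (1 - β)) 1 :=
    (continuousAt_const.div hk.continuous.continuousAt k1.ne').sub continuousAt_const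
  have hp : 0 < Jp / k 1 - β * (1 - β) := by
    have : Jp / k 1 - β * (1 - β) = η / k 1 := by rw [hJp]; field_simp; ring
    rw [this]; positivity
  obtain ⟨r, hr, hball⟩ := Metric.eventually_nhds_iff.1 (hc.eventually (lt_mem_nhds hp))
  set s := min (r/2) 1 with hs
  have hs0 : 0 < s := by positivity
  have hs1 : s ≤ 1 := min_le_right _ _
  have hsr : s < r := (min_le_left _ _).trans_lt (by linarith)
  have hsub : Icc (1 - s) 1 ⊆ Icc (0:ℝ) 1 := Icc_subset_Icc_left (by linarith)
  have hg : ∀ y ∈ Icc (1 - s) 1, 0 < Jp / k y - β * (1 - β) := by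
    intro y hy
    refine hball ?_
    rw [Real.dist_eq, abs_lt]
    constructor <;> linarith [hy.1, hy.2]
  have := small_eps (a := 1 - s) (b := 1) (fun _ => -(1/s)) (fun y => Jp / k y - β * (1 - β))
    continuousOn_const ((continuousOn_const.div hk.continuous.continuousOn
      (fun y hy => (hkpos y (hsub hy)).ne')).sub continuousOn_const) hg
  filter_upwards [this, self_mem_nhdsWithin] with ε hε hε0 ρ J hric hJ hle
  have hε0 : 0 < ε := hε0
  by_contra hn
  push Not at hn
  have key := cmp_up hε0 hric (a := 1 - s) (b := 1) (by linarith) le_rfl (by linarith)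
    (fun y => 1 - β + (1 - y) * (1/s)) (fun _ => -(1/s))
    (by
      intro y _
      have := (((hasDerivAt_id y).const_sub 1).mul_const (1/s)).const_add (1 - β)
      refine this.congr_deriv ?_
      ring)
    (by
      have := hle (1 - s) (hsub (left_mem_Icc.2 (by linarith)))
      have e : (1 - (1 - s)) * (1 / s) = 1 := by field_simp; ring
      rw [e]; linarith)
    (by
      intro y hy
      have h := hε y hy
      have l1 : ε * -(-(1/s)) ≤ ε * |(-(1/s))| :=
        mul_le_mul_of_nonneg_left (neg_le_abs _) hε0.le
      have l2 : Jp / k y ≤ J / k y := div_le_div_of_nonneg_right hn.le (hkpos y (hsub hy)).le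
      have l3 : 0 ≤ (1 - y) * (1/s) := mul_nonneg (by linarith [hy.2]) (by positivity)
      show (1 - β + (1 - y) * (1/s)) * (1 - (1 - β + (1 - y) * (1/s))) - J / k y < ε * -(1/s)
      set v := (1 - y) * (1/s)
      have l4 : (1 - β + v) * (1 - (1 - β + v)) ≤ β * (1 - β) := by nlinarith
      linarith)
  simp only [sub_self, zero_mul, add_zero] at key
  have : J ≤ k 1 * (β * (1 - β)) := by
    rw [hJ]
    gcongr
  linarith

/-- In the high-density regions `G_7 ∪ G_8`
(`0 < β < 1 - ρ_c^1`, `1 - ρ_*(β) < α < 1`, `α ≠ ρ_*(β)`), as `ε → 0` the solutions of the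
stationary boundary value problem converge to the high-density reduced orbit ending at
`ρ = 1 - β`: `ρ(1) → 1 - β`, `ρ(x) → (1/2)(1 + √(1 - 4β(1-β)k(1)/k(x)))` at interior
points `x`, and `ρ(0) → 1 - β(1-β)k(1)/(αk(0))` (boundary layer only at the entrance). -/
theorem bvp_high_density_profile
    (k : ℝ → ℝ) (ξs : ℝ)
    (hk : ContDiff ℝ 2 k)
    (hkpos : ∀ x ∈ Icc (0:ℝ) 1, 0 < k x)
    (hξs : ξs ∈ Ioo (0:ℝ) 1)
    (hmin : ∀ x ∈ Icc (0:ℝ) 1, x ≠ ξs → k ξs < k x)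
    (hk's : deriv k ξs = 0)
    (hk''s : 0 < deriv (deriv k) ξs)
    (α β : ℝ)
    (hβ0 : 0 < β) (hβ : β < 1 - rhoC1 k ξs)
    (hα1 : 1 - rhoLowStar k β < α) (hα2 : α < 1) (hα3 : α ≠ rhoLowStar k β) :
    ∀ δ > 0, ∀ x ∈ Ioo (0:ℝ) 1, ∃ ε₀ > 0, ∀ ε : ℝ, 0 < ε → ε < ε₀ →
      ∀ ρ : ℝ → ℝ, IsStatSol k ε α β ρ →
        |ρ 1 - (1 - β)| < δ ∧
        |ρ x - 1/2 * (1 + Real.sqrt (1 - 4*β*(1-β) * k 1 / k x))| < δ ∧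
        |ρ 0 - (1 - β*(1-β) * k 1 / (α * k 0))| < δ := by
  have m0 : (0:ℝ) ∈ Icc (0:ℝ) 1 := by simp
  have m1 : (1:ℝ) ∈ Icc (0:ℝ) 1 := by simp
  have k0 := hkpos 0 m0
  have k1 := hkpos 1 m1
  have kξ := hkpos ξs (Ioo_subset_Icc_self hξs)
  have hkξ1 : k ξs < k 1 := hmin 1 m1 hξs.2.ne'
  have hmin' : ∀ y ∈ Icc (0:ℝ) 1, k ξs ≤ k y := by
    intro y hy
    rcases eq_or_ne y ξs with h | h
    · rw [h]
    · exact (hmin y hy h).le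
  set Js := β * (1 - β) * k 1 with hJs
  have hrew : ∀ z, 1 - 4*β*(1-β) * k 1 / k z = 1 - 4 * Js / k z := by
    intro z; rw [hJs]; ring
  unfold rhoC1 at hβ
  unfold rhoLowStar at hα1
  rw [hrew] at hα1
  simp only [hrew]
  have hc0 : 0 ≤ 1 - k ξs / k 1 := by
    have : k ξs / k 1 < 1 := (div_lt_one k1).2 hkξ1
    linarith
  have hc1 := Real.sqrt_nonneg (1 - k ξs / k 1)
  have hc2 := Real.sq_sqrt hc0
  have hβh : β < 1/2 := by linarith
  have h4J : 4 * Js < k ξs := by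
    have h : 4 * (β * (1 - β)) < k ξs / k 1 := by nlinarith
    rw [lt_div_iff₀ k1] at h
    rw [hJs]; linarith
  have hJspos : 0 < Js := by
    have : 0 < 1 - β := by linarith
    positivity
  have hd : ∀ y ∈ Icc (0:ℝ) 1, 0 < 1 - 4 * Js / k y := fun y hy =>
    disc_pos (hkpos y hy) (h4J.trans_le (hmin' y hy))
  have hD1 : Real.sqrt (1 - 4 * Js / k 1) = 1 - 2 * β := by
    have : 1 - 4 * Js / k 1 = (1 - 2*β)^2 := by rw [hJs]; field_simp; ring
    rw [this, Real.sqrt_sq (by linarith)]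
  set D0 := Real.sqrt (1 - 4 * Js / k 0) with hD0
  have hD0pos : 0 < D0 := Real.sqrt_pos.2 (hd 0 m0)
  have hD0sq : D0 ^ 2 = 1 - 4 * Js / k 0 := Real.sq_sqrt (hd 0 m0).le
  have hq : 0 < Js / k 0 := by positivity
  have hq' : Js / k 0 = (1 - D0^2)/4 := by rw [hD0sq]; ring
  have hD0lt : D0 < 1 := by nlinarith
  have hα0 : 0 < α := by linarith
  have hent : Js / (k 0 * α) < 1/2 + D0 / 2 := by
    rw [← div_div, div_lt_iff₀ hα0, hq']
    nlinarith
  -- choice of the initial level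
  obtain ⟨s0, hs0lt, hs0⟩ : ∃ s0, 1/2 + s0 * D0 < 1 - Js / (k 0 * α) ∧
      s0 ∈ Ioo (-1/2:ℝ) (1/2) := by
    have hc : ContinuousAt (fun s : ℝ => 1 - Js / (k 0 * α) - (1/2 + s * D0)) (-1/2) := by fun_prop
    have hp : 0 < 1 - Js / (k 0 * α) - (1/2 + (-1/2) * D0) := by linarith
    have h1 := (hc.eventually (lt_mem_nhds hp)).filter_mono (nhdsWithin_le_nhds (s := Ioi (-1/2:ℝ)))
    have h2 : ∀ᶠ s in 𝓝[>] (-1/2:ℝ), s ∈ Ioo (-1/2:ℝ) (1/2) := Ioo_mem_nhdsGT (by norm_num)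
    obtain ⟨s, a, b⟩ := (h1.and h2).exists
    exact ⟨s, by linarith, b⟩
  have hJcont : ∀ z, ContinuousAt (fun t : ℝ => Real.sqrt (1 - 4 * (Js + t) / k z)) 0 := by
    intro z; fun_prop
  have hJcont' : ∀ z, ContinuousAt (fun t : ℝ => Real.sqrt (1 - 4 * (Js - t) / k z)) 0 := by
    intro z; fun_prop
  -- upper bound for the current
  have C1 : ∀ η > 0, ∀ᶠ ε in 𝓝[>] (0:ℝ), ∀ ρ J, RicSol k ε J ρ → J = k 1 * (β * ρ 1) →
      (∀ y ∈ Icc (0:ℝ) 1, ρ y ≤ 1) → J ≤ Js + η := fun η hη => J_up hk hkpos hβ0 hβh hη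
  -- lower bound for the profile
  have C2 : ∀ X ∈ Ioc (0:ℝ) 1, ∀ d > 0, ∀ᶠ ε in 𝓝[>] (0:ℝ), ∀ ρ J, RicSol k ε J ρ →
      J = k 0 * (α * (1 - ρ 0)) → J = k 1 * (β * ρ 1) →
      (∀ y ∈ Icc (0:ℝ) 1, ρ y ≤ 1) →
      1/2 * (1 + Real.sqrt (1 - 4 * Js / k X)) - d < ρ X := by
    intro X hX d hdp
    have e1 : ∀ᶠ t in 𝓝 (0:ℝ), 0 < k ξs - 4 * (Js + t) := by
      have : ContinuousAt (fun t : ℝ => k ξs - 4 * (Js + t)) 0 := by fun_prop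
      exact this.eventually (lt_mem_nhds (by simp only [add_zero]; linarith))
    have e2 : ∀ᶠ t in 𝓝 (0:ℝ), 0 < 1 - (Js + t) / (k 0 * α) -
        (1/2 + s0 * Real.sqrt (1 - 4 * (Js + t) / k 0)) := by
      have : ContinuousAt (fun t : ℝ => 1 - (Js + t) / (k 0 * α) -
        (1/2 + s0 * Real.sqrt (1 - 4 * (Js + t) / k 0))) 0 := by fun_prop
      exact this.eventually (lt_mem_nhds (by simp only [add_zero]; linarith))
    have e3 : ∀ᶠ t in 𝓝 (0:ℝ), 1/2 * (1 + Real.sqrt (1 - 4 * Js / k X)) - d <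
        1/2 + (1/2 - t) * Real.sqrt (1 - 4 * (Js + t) / k X) := by
      have : ContinuousAt (fun t : ℝ => 1/2 + (1/2 - t) * Real.sqrt (1 - 4 * (Js + t) / k X)) 0 := by
        fun_prop
      exact this.eventually (lt_mem_nhds (by simp only [add_zero, sub_zero]; linarith))
    have e4 : ∀ᶠ t in 𝓝[>] (0:ℝ), t ∈ Ioo (0:ℝ) 1 := Ioo_mem_nhdsGT one_pos
    obtain ⟨t, ⟨⟨t1, t2⟩, t3⟩, t4⟩ :=
      ((((e1.and e2).and e3).filter_mono (nhdsWithin_le_nhds (s := Ioi _))).and e4).exists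
    have hb := low_bd hk hkpos (Jp := Js + t) (X := X) (s0 := s0) (s1 := 1/2 - t)
      (fun y hy => by linarith [hmin' y hy]) hX hs0 ⟨by linarith [t4.2], by linarith [t4.1]⟩
    filter_upwards [hb, C1 t t4.1] with ε hb h1 ρ J hric hJ0 hJ1 hle
    have hJle := h1 ρ J hric hJ1 hle
    refine t3.trans_le (hb ρ J hJle hric ?_)
    have e : ρ 0 = 1 - J / (k 0 * α) := by rw [hJ0]; field_simp; ring
    have : J / (k 0 * α) ≤ (Js + t) / (k 0 * α) :=
      div_le_div_of_nonneg_right hJle (by positivity)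
    linarith
  -- lower bound for the current
  have C3 : ∀ η > 0, ∀ᶠ ε in 𝓝[>] (0:ℝ), ∀ ρ J, RicSol k ε J ρ →
      J = k 0 * (α * (1 - ρ 0)) → J = k 1 * (β * ρ 1) →
      (∀ y ∈ Icc (0:ℝ) 1, ρ y ≤ 1) → Js - η ≤ J := by
    intro η hη
    filter_upwards [C2 1 ⟨one_pos, le_rfl⟩ (η / (k 1 * β)) (by positivity)] with ε h ρ J hric hJ0 hJ1 hle
    have h := h ρ J hric hJ0 hJ1 hle
    rw [hD1] at h
    have h' : 1 - β - η / (k 1 * β) < ρ 1 := by linarith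
    have h'' := mul_lt_mul_of_pos_left h' (mul_pos k1 hβ0)
    have e : k 1 * β * (1 - β - η / (k 1 * β)) = Js - η := by rw [hJs]; field_simp
    rw [e] at h''
    rw [hJ1]; linarith
  -- upper bound for the profile
  have C4 : ∀ X ∈ Ioc (0:ℝ) 1, ∀ d > 0, ∀ᶠ ε in 𝓝[>] (0:ℝ), ∀ ρ J, RicSol k ε J ρ →
      J = k 0 * (α * (1 - ρ 0)) → J = k 1 * (β * ρ 1) →
      (∀ y ∈ Icc (0:ℝ) 1, ρ y ≤ 1) →
      ρ X < 1/2 * (1 + Real.sqrt (1 - 4 * Js / k X)) + d := by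
    intro X hX d hdp
    have e3 : ∀ᶠ t in 𝓝 (0:ℝ), 1/2 + (1/2 + t) * Real.sqrt (1 - 4 * (Js - t) / k X) <
        1/2 * (1 + Real.sqrt (1 - 4 * Js / k X)) + d := by
      have : ContinuousAt (fun t : ℝ => 1/2 + (1/2 + t) * Real.sqrt (1 - 4 * (Js - t) / k X)) 0 := by
        fun_prop
      exact this.eventually (gt_mem_nhds (by simp only [add_zero, sub_zero]; linarith))
    have e4 : ∀ᶠ t in 𝓝[>] (0:ℝ), t ∈ Ioo (0:ℝ) 1 := Ioo_mem_nhdsGT one_pos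
    obtain ⟨t, t3, t4⟩ := ((e3.filter_mono (nhdsWithin_le_nhds (s := Ioi _))).and e4).exists
    have hs : 1/2 < 1 / D0 := by
      rw [lt_div_iff₀ hD0pos]; linarith
    have hb := up_bd hk hkpos (Jp := Js - t) (X := X) (s0 := 1 / D0) (s1 := 1/2 + t)
      (fun y hy => by linarith [hmin' y hy, t4.1]) hX hs (by linarith [t4.1])
    filter_upwards [hb, C3 t t4.1] with ε hb h1 ρ J hric hJ0 hJ1 hle
    refine (hb ρ J (h1 ρ J hric hJ0 hJ1 hle) hric ?_).trans_lt t3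
    have hmono : D0 ≤ Real.sqrt (1 - 4 * (Js - t) / k 0) := by
      apply Real.sqrt_le_sqrt
      have : 4 * (Js - t) / k 0 ≤ 4 * Js / k 0 :=
        div_le_div_of_nonneg_right (by linarith [t4.1]) k0.le
      linarith
    have : 1 / D0 * D0 ≤ 1 / D0 * Real.sqrt (1 - 4 * (Js - t) / k 0) :=
      mul_le_mul_of_nonneg_left hmono (by positivity)
    rw [one_div_mul_cancel hD0pos.ne'] at this
    linarith [hle 0 m0]
  intro δ hδ x hx
  have hxI : x ∈ Ioc (0:ℝ) 1 := ⟨hx.1, hx.2.le⟩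
  set η := min (δ * (k 1 * β)) (δ * (k 0 * α)) / 2 with hη
  have hηpos : 0 < η := by positivity
  have hη1 : η < δ * (k 1 * β) := by
    have := min_le_left (δ * (k 1 * β)) (δ * (k 0 * α))
    have : 0 < δ * (k 1 * β) := by positivity
    linarith
  have hη2 : η < δ * (k 0 * α) := by
    have := min_le_right (δ * (k 1 * β)) (δ * (k 0 * α))
    have : 0 < δ * (k 0 * α) := by positivity
    linarith
  have hall := (C1 η hηpos).and ((C3 η hηpos).and ((C2 x hxI δ hδ).and (C4 x hxI δ hδ)))
  obtain ⟨ε₀, hε₀, hsub⟩ := mem_nhdsGT_iff_exists_Ioo_subset.1 hall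
  refine ⟨ε₀, hε₀, ?_⟩
  intro ε hε hεlt ρ hρ
  obtain ⟨q1, q3, q2, q4⟩ := hsub ⟨hε, hεlt⟩
  obtain ⟨J, -, hric, hJ0, hJ1, hle⟩ := sol_facts hk hkpos hα0 hβ0 hε hρ
  have q1 := q1 ρ J hric hJ1 hle
  have q3 := q3 ρ J hric hJ0 hJ1 hle
  have q2 := q2 ρ J hric hJ0 hJ1 hle
  have q4 := q4 ρ J hric hJ0 hJ1 hle
  have hkβ : 0 < k 1 * β := by positivity
  have hkα : 0 < k 0 * α := by positivity
  have hJJ : |J - Js| ≤ η := abs_le.2 ⟨by linarith, by linarith⟩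
  refine ⟨?_, ?_, ?_⟩
  · have e : ρ 1 - (1 - β) = (J - Js) / (k 1 * β) := by rw [hJ1, hJs]; field_simp
    rw [e, abs_div, abs_of_pos hkβ, div_lt_iff₀ hkβ]
    linarith
  · rw [abs_lt]; constructor <;> linarith
  · have e : ρ 0 - (1 - Js / (α * k 0)) = -((J - Js) / (k 0 * α)) := by
      rw [hJ0]; field_simp; ring
    rw [e, abs_neg, abs_div, abs_of_pos hkα, div_lt_iff₀ hkα]
    linarith
end
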